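/- Every left-full computable instance of the cross-constraint problem has a solution (X^i,Y^i)_{i<2} such that the jump of (X⁰,Y⁰) ⊕ (X¹,Y¹) is Turing reducible to ∅′ (i.e., the join of the solution is low). -/

import Mathlib

namespace Paper

/-- Codes for oracle Turing machines. -/
inductive OCode : Type
  | zero | succ | left | right | oracle
  | pair (a b : OCode) | comp (a b : OCode) | prec (a b : OCode) | rfind' (a : OCode)

/-- Evaluation of an oracle code with oracle `O`. -/
def oeval (O : ℕ → ℕ) : OCode → ℕ →. ℕ
  | .zero => pure 0
  | .succ => Nat.succ
  | .left => ↑fun n : ℕ => n.unpair.1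
  | .right => ↑fun n : ℕ => n.unpair.2
  | .oracle => ↑fun n : ℕ => O n
  | .pair cf cg => fun n => Nat.pair <$> oeval O cf n <*> oeval O cg n
  | .comp cf cg => fun n => oeval O cg n >>= oeval O cf
  | .prec cf cg =>
    Nat.unpaired fun a n =>
      n.rec (oeval O cf a) fun y IH => do
        let i ← IH
        oeval O cg (Nat.pair a (Nat.pair y i))
  | .rfind' cf =>
    Nat.unpaired fun a m =>
      (Nat.rfind fun n => (fun m => m = 0) <$> oeval O cf (Nat.pair a (n + m))).map (· + m)

/-- A numbering of oracle codes. -/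
def encodeOCode : OCode → ℕ
  | .zero => 0
  | .succ => 1
  | .left => 2
  | .right => 3
  | .oracle => 4
  | .pair a b => 4 * Nat.pair (encodeOCode a) (encodeOCode b) + 5
  | .comp a b => 4 * Nat.pair (encodeOCode a) (encodeOCode b) + 6
  | .prec a b => 4 * Nat.pair (encodeOCode a) (encodeOCode b) + 7
  | .rfind' a => 4 * encodeOCode a + 8

/-- The Turing jump of an oracle. -/
def jump (O : ℕ → ℕ) : Set ℕ :=
  { n | ∃ c : OCode, encodeOCode c = n.unpair.1 ∧ (oeval O c n.unpair.2).Dom }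

/-- `f` is (total) recursive in the oracle `O`. -/
def RecIn (O : ℕ → ℕ) (f : ℕ → ℕ) : Prop :=
  ∃ c : OCode, ∀ n, oeval O c n = Part.some (f n)

/-- The all-zero (trivial, computable) oracle. -/
def zeroO : ℕ → ℕ := fun _ => 0

/-- Characteristic function of a set of naturals. -/
noncomputable def chi (A : Set ℕ) : ℕ → ℕ := A.indicator fun _ => 1

/-- Turing join of two oracles. -/
def joinF (f g : ℕ → ℕ) : ℕ → ℕ := fun n => if n % 2 = 0 then f (n / 2) else g (n / 2)

/-- `A` is Σ⁰₁ relative to the oracle `O` (c.e. in `O`). -/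
def SigmaIn (O : ℕ → ℕ) (A : Set ℕ) : Prop :=
  ∃ c : OCode, ∀ n, n ∈ A ↔ (oeval O c n).Dom

/-- The halting problem `∅′`. -/
noncomputable def emptyJump : Set ℕ := jump zeroO

end Paper
namespace Paper

abbrev Str3 := List (Fin 3)
abbrev StrTup (r : ℕ) := Fin r → List (Fin 2)

/-- A cross-tree `T ⊆ 3^{<ℕ} × (2^{<ℕ})^r`. -/
structure CrossTree (r : ℕ) where
  mem : Set (Str3 × StrTup r)
  len_eq : ∀ p ∈ mem, ∀ i j : Fin r, (p.2 i).length = (p.2 j).length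
  len_le : ∀ p ∈ mem, ∀ i : Fin r, (p.2 i).length ≤ p.1.length
  closed : ∀ p ∈ mem, ∀ q : Str3 × StrTup r, q.1 <+: p.1 → (∀ i, q.2 i <+: p.2 i) →
    (∀ i j : Fin r, (q.2 i).length = (q.2 j).length) →
    (∀ i : Fin r, (q.2 i).length ≤ q.1.length) → q ∈ mem

/-- Length-`n` initial segment of an infinite sequence. -/
def seg {α : Type} (X : ℕ → α) (n : ℕ) : List α := List.ofFn fun i : Fin n => X i

/-- `(X, Y)` is an infinite path of the cross-tree `T`. -/
def IsPath {r : ℕ} (T : CrossTree r) (X : ℕ → Fin 3) (Y : Fin r → ℕ → Fin 2) : Prop :=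
  ∀ n, (seg X n, fun i => seg (Y i) n) ∈ T.mem

/-- The infinite sequence `X` extends the finite string `ρ`. -/
def ExtendsL {α : Type} (X : ℕ → α) (ρ : List α) : Prop :=
  ∀ i : Fin ρ.length, X i = ρ.get i

/-- `T` is left-full below `(ρ, σ)`. -/
def LeftFullBelow {r : ℕ} (T : CrossTree r) (ρ : Str3) (σ : StrTup r) : Prop :=
  ∀ X : ℕ → Fin 3, ExtendsL X ρ →
    ∃ Y : Fin r → ℕ → Fin 2, (∀ i, ExtendsL (Y i) (σ i)) ∧ IsPath T X Y

/-- `T` is left-full (below the pair of empty stems). -/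
def LeftFull {r : ℕ} (T : CrossTree r) : Prop := LeftFullBelow T [] fun _ => []

/-- Encoding of nodes of a cross-tree as natural numbers. -/
def encNode {r : ℕ} (p : Str3 × StrTup r) : ℕ :=
  Nat.pair (Encodable.encode p.1) (Encodable.encode (List.ofFn p.2))

/-- The cross-tree `T` is computable. -/
def TreeComputable {r : ℕ} (T : CrossTree r) : Prop :=
  RecIn zeroO (chi {n | ∃ p ∈ T.mem, encNode p = n})

/-- A solution to the cross-constraint problem on instance `T`: a pair of paths whose
first components are finitely compatible and whose second components are pairwise
infinitely compatible. -/
def CCSolution {r : ℕ} (T : CrossTree r) (X : Fin 2 → ℕ → Fin 3)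
    (Y : Fin 2 → Fin r → ℕ → Fin 2) : Prop :=
  (∀ i : Fin 2, IsPath T (X i) (Y i)) ∧
  (∀ j : Fin 3, {n | X 0 n = j ∧ X 1 n = j}.Finite) ∧
  (∀ s : Fin r, ∃ j : Fin 2, {n | Y 0 s n = j ∧ Y 1 s n = j}.Infinite)

/-- Oracle encoding a path `(X, Y)` of a cross-tree. -/
def solOracle {r : ℕ} (X : ℕ → Fin 3) (Y : Fin r → ℕ → Fin 2) : ℕ → ℕ := fun n =>
  if n.unpair.1 = 0 then (X n.unpair.2 : ℕ)
  else if h : n.unpair.1 - 1 < r then (Y ⟨n.unpair.1 - 1, h⟩ n.unpair.2 : ℕ) else 0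

end Paper

namespace Paper

/-! ### Arithmetical calculus -/

/-- Initial segment of an oracle as a list of numbers. -/
def pre (O : ℕ → ℕ) (k : ℕ) : List ℕ := (List.range k).map O

@[simp] theorem pre_length (O : ℕ → ℕ) (k : ℕ) : (pre O k).length = k := by simp [pre]

theorem pre_take (O : ℕ → ℕ) (k j : ℕ) (h : j ≤ k) : (pre O k).take j = pre O j := by
  rw [pre, ← List.map_take, List.take_range, min_eq_left h]; rfl

theorem pre_get (O : ℕ → ℕ) (k j : ℕ) (h : j < k) (d : ℕ) : (pre O k).getD j d = O j := by
  simp [pre, List.getD, h]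

theorem pre_get? (O : ℕ → ℕ) (k j : ℕ) : (pre O k)[j]? = if j < k then some (O j) else none := by
  by_cases h : j < k
  · simp [pre, h]
  · simp [pre, h]

theorem pre_map (O : ℕ → ℕ) (f : ℕ → ℕ) (k : ℕ) : (pre O k).map f = pre (fun n => f (O n)) k := by
  simp [pre]

theorem pre_congr {O O' : ℕ → ℕ} {k : ℕ} (h : ∀ i < k, O i = O' i) : pre O k = pre O' k := by
  simp only [pre]
  apply List.map_congr_left
  intro a ha
  exact h a (by simpa using ha)

theorem list_eq_pre (l : List ℕ) (d : ℕ) : l = pre (fun n => l.getD n d) l.length := by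
  apply List.ext_getElem?
  intro i
  rw [pre_get?]
  by_cases h : i < l.length
  · simp [h]
  · simp [h]

section
variable {α β γ : Type} [Primcodable α] [Primcodable β] [Primcodable γ]

/-- Sigma-2 predicates. -/
def Sig2 (p : α → Prop) : Prop :=
  ∃ R : (α × ℕ) × ℕ → Prop, PrimrecPred R ∧ ∀ x, p x ↔ ∃ a, ∀ b, R ((x, a), b)

theorem Sig2.of_eq {p q : α → Prop} (h : Sig2 p) (e : ∀ x, p x ↔ q x) : Sig2 q := by
  obtain ⟨R, hR, hp⟩ := h
  exact ⟨R, hR, fun x => (e x).symm.trans (hp x)⟩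

theorem Sig2.of_prim {p : α → Prop} (h : PrimrecPred p) : Sig2 p :=
  ⟨fun y => p y.1.1, h.comp (Primrec.fst.comp Primrec.fst), fun x => by simp⟩

theorem Sig2.comp {p : β → Prop} (h : Sig2 p) {f : α → β} (hf : Primrec f) :
    Sig2 (fun x => p (f x)) := by
  obtain ⟨R, hR, hp⟩ := h
  refine ⟨fun y => R ((f y.1.1, y.1.2), y.2), hR.comp ?_, fun x => hp _⟩
  exact Primrec.pair (Primrec.pair (hf.comp (Primrec.fst.comp Primrec.fst))
    (Primrec.snd.comp Primrec.fst)) Primrec.snd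

theorem Sig2.and {p q : α → Prop} (hp : Sig2 p) (hq : Sig2 q) : Sig2 (fun x => p x ∧ q x) := by
  obtain ⟨R, hR, hp⟩ := hp
  obtain ⟨S, hS, hq⟩ := hq
  refine ⟨fun y => R ((y.1.1, y.1.2.unpair.1), y.2) ∧ S ((y.1.1, y.1.2.unpair.2), y.2),
    (hR.comp ?_).and (hS.comp ?_), fun x => ?_⟩
  · exact Primrec.pair (Primrec.pair (Primrec.fst.comp Primrec.fst)
      (Primrec.fst.comp (Primrec.unpair.comp (Primrec.snd.comp Primrec.fst)))) Primrec.snd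
  · exact Primrec.pair (Primrec.pair (Primrec.fst.comp Primrec.fst)
      (Primrec.snd.comp (Primrec.unpair.comp (Primrec.snd.comp Primrec.fst)))) Primrec.snd
  · beta_reduce
    rw [hp, hq]
    constructor
    · rintro ⟨⟨a, ha⟩, b, hb⟩
      exact ⟨Nat.pair a b, fun c => by simpa using ⟨ha c, hb c⟩⟩
    · rintro ⟨a, ha⟩
      exact ⟨⟨a.unpair.1, fun c => (ha c).1⟩, ⟨a.unpair.2, fun c => (ha c).2⟩⟩

theorem Sig2.or {p q : α → Prop} (hp : Sig2 p) (hq : Sig2 q) : Sig2 (fun x => p x ∨ q x) := by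
  obtain ⟨R, hR, hp⟩ := hp
  obtain ⟨S, hS, hq⟩ := hq
  refine ⟨fun y => (y.1.2.unpair.1 = 0 ∧ R ((y.1.1, y.1.2.unpair.2), y.2)) ∨
      (y.1.2.unpair.1 = 1 ∧ S ((y.1.1, y.1.2.unpair.2), y.2)),
    (PrimrecPred.and ?_ (hR.comp ?_)).or (PrimrecPred.and ?_ (hS.comp ?_)), fun x => ?_⟩
  · exact Primrec.eq.comp (Primrec.fst.comp (Primrec.unpair.comp (Primrec.snd.comp Primrec.fst)))
      (Primrec.const 0)
  · exact Primrec.pair (Primrec.pair (Primrec.fst.comp Primrec.fst)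
      (Primrec.snd.comp (Primrec.unpair.comp (Primrec.snd.comp Primrec.fst)))) Primrec.snd
  · exact Primrec.eq.comp (Primrec.fst.comp (Primrec.unpair.comp (Primrec.snd.comp Primrec.fst)))
      (Primrec.const 1)
  · exact Primrec.pair (Primrec.pair (Primrec.fst.comp Primrec.fst)
      (Primrec.snd.comp (Primrec.unpair.comp (Primrec.snd.comp Primrec.fst)))) Primrec.snd
  · beta_reduce
    rw [hp, hq]
    constructor
    · rintro (⟨a, ha⟩ | ⟨a, ha⟩)
      · exact ⟨Nat.pair 0 a, fun c => by simpa using ha c⟩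
      · exact ⟨Nat.pair 1 a, fun c => by simpa using ha c⟩
    · rintro ⟨a, ha⟩
      rcases ha 0 with h | h
      · refine Or.inl ⟨a.unpair.2, fun c => ?_⟩
        rcases ha c with h' | h'
        · exact h'.2
        · simp only at h h'; omega
      · refine Or.inr ⟨a.unpair.2, fun c => ?_⟩
        rcases ha c with h' | h'
        · simp only at h h'; omega
        · exact h'.2

/-- A primitive recursive predicate, pulled back along decoding. -/
theorem primrec_decode_pred {p : α × β → Prop} (h : PrimrecPred p) :
    PrimrecPred (fun y : α × ℕ => ∃ b, Encodable.decode (α := β) y.2 = some b ∧ p (y.1, b)) := by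
  classical
  have h1 : Primrec (fun y : α × ℕ =>
      Option.casesOn (motive := fun _ => Bool) (Encodable.decode (α := β) y.2) false
        (fun b => decide (p (y.1, b)))) := by
    refine Primrec.option_casesOn (Primrec.decode.comp Primrec.snd) (Primrec.const false) ?_
    exact (h.decide.comp (Primrec.pair (Primrec.fst.comp Primrec.fst) Primrec.snd)).to₂
  refine PrimrecPred.of_eq (p := fun y : α × ℕ =>
      (Option.casesOn (motive := fun _ => Bool) (Encodable.decode (α := β) y.2) false
        (fun b => decide (p (y.1, b)))) = true) (Primrec.eq.comp h1 (Primrec.const true)) ?_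
  intro y
  cases Encodable.decode (α := β) y.2 <;> simp

theorem Sig2.exists {p : α × β → Prop} (hp : Sig2 p) : Sig2 (fun x => ∃ y, p (x, y)) := by
  obtain ⟨R, hR, hp⟩ := hp
  have h1 := primrec_decode_pred (α := (α × ℕ) × ℕ) (β := β)
    (p := fun z => R (((z.1.1.1, z.2), z.1.1.2), z.1.2)) (hR.comp (by
      exact Primrec.pair (Primrec.pair (Primrec.pair
        (Primrec.fst.comp (Primrec.fst.comp Primrec.fst)) Primrec.snd)
        (Primrec.snd.comp (Primrec.fst.comp Primrec.fst))) (Primrec.snd.comp Primrec.fst)))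
  refine ⟨_, h1.comp (f := fun y : (α × ℕ) × ℕ =>
    (((y.1.1, y.1.2.unpair.2), y.2), y.1.2.unpair.1)) ?_, fun x => ?_⟩
  · exact Primrec.pair (Primrec.pair (Primrec.pair (Primrec.fst.comp Primrec.fst)
      (Primrec.snd.comp (Primrec.unpair.comp (Primrec.snd.comp Primrec.fst)))) Primrec.snd)
      (Primrec.fst.comp (Primrec.unpair.comp (Primrec.snd.comp Primrec.fst)))
  · constructor
    · rintro ⟨y, hy⟩
      obtain ⟨a, ha⟩ := (hp _).1 hy
      refine ⟨Nat.pair (Encodable.encode y) a, fun b => ⟨y, by simp, ?_⟩⟩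
      simpa using ha b
    · rintro ⟨a, ha⟩
      obtain ⟨y, hy, -⟩ := ha 0
      refine ⟨y, (hp _).2 ⟨a.unpair.2, fun b => ?_⟩⟩
      obtain ⟨y', hy', h⟩ := ha b
      simp only at hy hy' h
      rw [hy] at hy'
      cases hy'
      exact h

theorem primrec_ball {p : α × ℕ → Prop} (h : PrimrecPred p) {f : α → ℕ} (hf : Primrec f) :
    PrimrecPred (fun x => ∀ i < f x, p (x, i)) := by
  have h1 : PrimrecRel (fun (i : ℕ) (x : α) => p (x, i)) :=
    h.comp (Primrec.pair Primrec.snd Primrec.fst)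
  have h2 := h1.forall_mem_list.comp (Primrec.list_range.comp hf) Primrec.id
  exact h2.of_eq fun x => by simp

theorem primrec_bex {p : α × ℕ → Prop} (h : PrimrecPred p) {f : α → ℕ} (hf : Primrec f) :
    PrimrecPred (fun x => ∃ i < f x, p (x, i)) := by
  have h1 : PrimrecRel (fun (i : ℕ) (x : α) => p (x, i)) :=
    h.comp (Primrec.pair Primrec.snd Primrec.fst)
  have h2 := h1.exists_mem_list.comp (Primrec.list_range.comp hf) Primrec.id
  exact h2.of_eq fun x => by simp

theorem primrec_ball_list {p : α × β → Prop} (h : PrimrecPred p) {f : α → List β}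
    (hf : Primrec f) : PrimrecPred (fun x => ∀ i ∈ f x, p (x, i)) := by
  have h1 : PrimrecRel (fun (i : β) (x : α) => p (x, i)) :=
    h.comp (Primrec.pair Primrec.snd Primrec.fst)
  exact h1.forall_mem_list.comp hf Primrec.id

theorem primrec_bex_list {p : α × β → Prop} (h : PrimrecPred p) {f : α → List β}
    (hf : Primrec f) : PrimrecPred (fun x => ∃ i ∈ f x, p (x, i)) := by
  have h1 : PrimrecRel (fun (i : β) (x : α) => p (x, i)) :=
    h.comp (Primrec.pair Primrec.snd Primrec.fst)
  exact h1.exists_mem_list.comp hf Primrec.id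

theorem Sig2.ball {p : α × ℕ → Prop} (hp : Sig2 p) {f : α → ℕ} (hf : Primrec f) :
    Sig2 (fun x => ∀ i < f x, p (x, i)) := by
  obtain ⟨R, hR, hp⟩ := hp
  have h1 := primrec_ball (α := (α × List ℕ) × ℕ)
    (p := fun z => R (((z.1.1.1, z.2), z.1.1.2.getD z.2 0), z.1.2)) (hR.comp (by
      exact Primrec.pair (Primrec.pair (Primrec.pair
        (Primrec.fst.comp (Primrec.fst.comp Primrec.fst)) Primrec.snd)
        ((Primrec.list_getD 0).comp (Primrec.snd.comp (Primrec.fst.comp Primrec.fst)) Primrec.snd))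
        (Primrec.snd.comp Primrec.fst))) (f := fun z => f z.1.1)
      (hf.comp (Primrec.fst.comp Primrec.fst))
  have h2 : Sig2 (α := α × List ℕ) (fun x => ∀ b, ∀ i < f x.1, R (((x.1, i), x.2.getD i 0), b)) :=
    ⟨_, h1.comp (f := fun y : ((α × List ℕ) × ℕ) × ℕ => (y.1.1, y.2))
      (Primrec.pair (Primrec.fst.comp Primrec.fst) Primrec.snd), fun x => by simp⟩
  refine h2.exists.of_eq fun x => ?_
  constructor
  · rintro ⟨L, hL⟩ i hi
    exact (hp _).2 ⟨_, fun b => hL b i hi⟩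
  · intro h
    have h' : ∀ i, ∃ a, i < f x → ∀ b, R (((x, i), a), b) := by
      intro i
      by_cases hi : i < f x
      · obtain ⟨a, ha⟩ := (hp _).1 (h i hi)
        exact ⟨a, fun _ => ha⟩
      · exact ⟨0, fun h => absurd h hi⟩
    choose g hg using h'
    refine ⟨pre g (f x), fun b i hi => ?_⟩
    simp only
    rw [pre_get _ _ _ hi]
    exact hg i hi b

/-- Predicates which are c.e. in `O`. -/
def SigO (O : ℕ → ℕ) (p : α → Prop) : Prop :=
  ∃ R : List ℕ × α → Prop, PrimrecPred R ∧ ∀ x, p x ↔ ∃ k, R (pre O k, x)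

theorem SigO.of_eq {O : ℕ → ℕ} {p q : α → Prop} (h : SigO O p) (e : ∀ x, p x ↔ q x) :
    SigO O q := by
  obtain ⟨R, hR, hp⟩ := h
  exact ⟨R, hR, fun x => (e x).symm.trans (hp x)⟩

theorem SigO.of_dec {O : ℕ → ℕ} {R : List ℕ × α → Prop} (hR : PrimrecPred R) {u : α → ℕ}
    (hu : Primrec u) : SigO O (fun x => R (pre O (u x), x)) := by
  refine ⟨fun y => y.1.length = u y.2 ∧ R y, PrimrecPred.and ?_ hR, fun x => ?_⟩
  · exact Primrec.eq.comp (Primrec.list_length.comp Primrec.fst) (hu.comp Primrec.snd)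
  · constructor
    · intro h
      exact ⟨u x, by simp, h⟩
    · rintro ⟨k, hk, h⟩
      simp at hk
      subst hk
      exact h

theorem SigO.exists {O : ℕ → ℕ} {p : α × β → Prop} (hp : SigO O p) :
    SigO O (fun x => ∃ y, p (x, y)) := by
  obtain ⟨R, hR, hp⟩ := hp
  have h1 := primrec_decode_pred (α := List ℕ × α) (β := β)
    (p := fun z => R (z.1.1, (z.1.2, z.2))) (hR.comp (by
      exact Primrec.pair (Primrec.fst.comp Primrec.fst)
        (Primrec.pair (Primrec.snd.comp Primrec.fst) Primrec.snd)))
  refine ⟨_, h1.comp (f := fun y : List ℕ × α =>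
    ((y.1.take y.1.length.unpair.2, y.2), y.1.length.unpair.1)) ?_, fun x => ?_⟩
  · have hl : Primrec (fun y : List ℕ × α => y.1.length) := Primrec.list_length.comp Primrec.fst
    exact Primrec.pair (Primrec.pair (Primrec.list_take.comp
      (Primrec.snd.comp (Primrec.unpair.comp hl)) Primrec.fst) Primrec.snd)
      (Primrec.fst.comp (Primrec.unpair.comp hl))
  · constructor
    · rintro ⟨y, hy⟩
      obtain ⟨a, ha⟩ := (hp _).1 hy
      refine ⟨Nat.pair (Encodable.encode y) a, y, by simp, ?_⟩
      simp only [pre_length, Nat.unpair_pair]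
      rw [pre_take _ _ _ (Nat.right_le_pair _ _)]
      exact ha
    · rintro ⟨k, y, hy, h⟩
      refine ⟨y, (hp _).2 ⟨k.unpair.2, ?_⟩⟩
      simp only [pre_length] at h
      rwa [pre_take _ _ _ (Nat.unpair_right_le _)] at h

open Nat.Partrec (Code)
open Nat.Partrec.Code

/-- Universal predicate. -/
def U (q : List ℕ × ℕ) : Prop :=
  ∃ j < q.1.length + 1, evaln q.1.length (Denumerable.ofNat Code q.2.unpair.1)
    (Encodable.encode (q.1.take j, q.2.unpair.2)) = some 1

theorem primrec_U : PrimrecPred U := by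
  refine primrec_bex (α := List ℕ × ℕ) (p := fun z =>
    evaln z.1.1.length (Denumerable.ofNat Code z.1.2.unpair.1)
    (Encodable.encode (z.1.1.take z.2, z.1.2.unpair.2)) = some 1) ?_
    (Primrec.succ.comp (Primrec.list_length.comp Primrec.fst))
  have hu : Primrec (fun z : (List ℕ × ℕ) × ℕ => z.1.2.unpair) :=
    Primrec.unpair.comp (Primrec.snd.comp Primrec.fst)
  refine Primrec.eq.comp (Nat.Partrec.Code.primrec_evaln.comp (Primrec.pair (Primrec.pair
    (Primrec.list_length.comp (Primrec.fst.comp Primrec.fst))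
    ((Primrec.ofNat Code).comp (Primrec.fst.comp hu))) (Primrec.encode.comp
      (Primrec.pair (Primrec.list_take.comp Primrec.snd (Primrec.fst.comp Primrec.fst))
      (Primrec.snd.comp hu))))) (Primrec.const (some 1))

theorem U_mono {F : ℕ → ℕ} {k k' n : ℕ} (hk : k ≤ k') (h : U (pre F k, n)) : U (pre F k', n) := by
  obtain ⟨j, hj, h⟩ := h
  simp only [pre_length] at hj h
  refine ⟨j, by simp; omega, ?_⟩
  simp only [pre_length]
  rw [pre_take _ _ _ (by omega)] at h ⊢
  exact evaln_mono hk h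

/-- Universal c.e. set relative to `O`. -/
def K (O : ℕ → ℕ) (n : ℕ) : Prop := ∃ k, U (pre O k, n)

theorem K_universal {R : List ℕ × ℕ → Prop} (hR : PrimrecPred R) :
    ∃ e, ∀ F x, (∃ k, R (pre F k, x)) ↔ K F (Nat.pair e x) := by
  classical
  have h1 : Primrec (fun q : List ℕ × ℕ => if R q then 1 else 0) :=
    Primrec.ite hR (Primrec.const 1) (Primrec.const 0)
  have h2 : Primrec (fun n : ℕ => if R (Denumerable.ofNat (List ℕ × ℕ) n) then 1 else 0) :=
    h1.comp (Primrec.ofNat _)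
  have h3 := Nat.Partrec.of_primrec (Primrec.nat_iff.1 h2)
  obtain ⟨c, hc⟩ := Nat.Partrec.Code.exists_code.1 h3
  refine ⟨Encodable.encode c, fun F x => ?_⟩
  have key : ∀ q : List ℕ × ℕ, R q ↔ 1 ∈ eval c (Encodable.encode q) := by
    intro q
    rw [hc]
    simp only [PFun.coe_val, Denumerable.ofNat_encode, Part.mem_some_iff]
    by_cases h : R q <;> simp [h]
  constructor
  · rintro ⟨j, hj⟩
    rw [key, evaln_complete] at hj
    obtain ⟨k, hk⟩ := hj
    refine ⟨max j k, j, by simp, ?_⟩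
    simp only [pre_length, Nat.unpair_pair, Denumerable.ofNat_encode]
    rw [pre_take _ _ _ (by omega)]
    exact evaln_mono (le_max_right _ _) hk
  · rintro ⟨k, j, hj, h⟩
    simp only [pre_length, Nat.unpair_pair, Denumerable.ofNat_encode] at h hj
    rw [pre_take _ _ _ (by omega)] at h
    exact ⟨j, (key _).2 (evaln_sound h)⟩

/-- Lowness, in the form: the universal `O`-c.e. set is Delta-2. -/
def Low (O : ℕ → ℕ) : Prop := Sig2 (K O) ∧ Sig2 (fun n => ¬ K O n)

theorem Low.sig {O : ℕ → ℕ} (hO : Low O) {p : α → Prop} (hp : SigO O p) :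
    Sig2 p ∧ Sig2 (fun x => ¬ p x) := by
  obtain ⟨R, hR, hp⟩ := hp
  obtain ⟨e, he⟩ := K_universal (primrec_decode_pred hR)
  have hf : Primrec (fun x : α => Nat.pair e (Encodable.encode x)) :=
    Primrec₂.natPair.comp (Primrec.const e) Primrec.encode
  have : ∀ x, K O (Nat.pair e (Encodable.encode x)) ↔ p x := by
    intro x
    rw [← he, hp]
    simp
  exact ⟨(hO.1.comp hf).of_eq this, (hO.2.comp hf).of_eq fun x => not_congr (this x)⟩

/-- Iterating a step function. -/
def iter (f : ℕ → List ℕ → List ℕ) : ℕ → List ℕ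
  | 0 => []
  | n + 1 => f n (iter f n)

theorem Sig2.iter {f : ℕ → List ℕ → List ℕ}
    (hf : Sig2 (fun z : (ℕ × List ℕ) × List ℕ => f z.1.1 z.1.2 = z.2))
    {A : ℕ × List ℕ → Prop} (hA : Sig2 A) : Sig2 (fun n => A (n, iter f n)) := by
  have g1 : Sig2 (fun z : (ℕ × List (List ℕ)) × ℕ =>
      f z.2 (z.1.2.getD z.2 []) = z.1.2.getD (z.2 + 1) []) := by
    refine hf.comp (f := fun z : (ℕ × List (List ℕ)) × ℕ =>
      ((z.2, z.1.2.getD z.2 []), z.1.2.getD (z.2 + 1) [])) ?_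
    exact Primrec.pair (Primrec.pair Primrec.snd
      ((Primrec.list_getD []).comp (Primrec.snd.comp Primrec.fst) Primrec.snd))
      ((Primrec.list_getD []).comp (Primrec.snd.comp Primrec.fst)
        (Primrec.succ.comp Primrec.snd))
  have g2 := g1.ball (f := fun z => z.1) Primrec.fst
  have g3 : Sig2 (fun z : ℕ × List (List ℕ) => A (z.1, z.2.getD z.1 [])) :=
    hA.comp (f := fun z : ℕ × List (List ℕ) => (z.1, z.2.getD z.1 []))
      (Primrec.pair Primrec.fst ((Primrec.list_getD []).comp Primrec.snd Primrec.fst))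
  have g4 : Sig2 (fun z : ℕ × List (List ℕ) => z.2.getD 0 [] = []) :=
    Sig2.of_prim (Primrec.eq.comp ((Primrec.list_getD []).comp Primrec.snd (Primrec.const 0))
      (Primrec.const []))
  refine ((g4.and g2).and g3).exists.of_eq fun n => ?_
  constructor
  · rintro ⟨L, ⟨h0, h1⟩, h2⟩
    simp only at h0 h1 h2
    have : ∀ i ≤ n, L.getD i [] = Paper.iter f i := by
      intro i
      induction i with
      | zero => intro _; exact h0
      | succ i ih =>
        intro hi
        rw [← h1 i (by omega), ih (by omega)]
        rfl
    rwa [this n le_rfl] at h2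
  · intro h
    have key : ∀ i ≤ n, ((List.range (n + 1)).map (Paper.iter f)).getD i [] = Paper.iter f i := by
      intro i hi
      simp [List.getD, Nat.lt_succ_of_le hi]
    refine ⟨(List.range (n + 1)).map (Paper.iter f), ⟨key 0 (by omega), fun i hi => ?_⟩, ?_⟩
    · simp only
      rw [key _ (by simp only at hi; omega), key _ (by simp only at hi; omega)]
      rfl
    · simp only
      rwa [key _ le_rfl]

end
end Paper

namespace Paper

/-! ### Low generics and the low basis theorem -/

/-- Position-wise pairing of oracles. -/
def ot (O W : ℕ → ℕ) : ℕ → ℕ := fun n => Nat.pair (O n) (W n)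

/-- Position-wise pairing of lists. -/
def zp (l w : List ℕ) : List ℕ :=
  (List.range w.length).map fun i => Nat.pair (l.getD i 0) (w.getD i 0)

theorem zp_pre (O W : ℕ → ℕ) (k : ℕ) : zp (pre O k) (pre W k) = pre (ot O W) k := by
  unfold zp
  rw [pre_length]
  conv_rhs => unfold pre
  apply List.map_congr_left
  intro a ha
  simp only [List.mem_range] at ha
  rw [pre_get _ _ _ ha, pre_get _ _ _ ha]
  rfl

theorem primrec_zp : Primrec (fun q : List ℕ × List ℕ => zp q.1 q.2) := by
  unfold zp
  refine Primrec.list_map (Primrec.list_range.comp (Primrec.list_length.comp Primrec.snd)) ?_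
  exact Primrec₂.natPair.comp
    ((Primrec.list_getD 0).comp (Primrec.fst.comp Primrec.fst) Primrec.snd)
    ((Primrec.list_getD 0).comp (Primrec.snd.comp Primrec.fst) Primrec.snd)

/-- All words of length `k` over the alphabet `{0, ..., b-1}`. -/
def strs (b k : ℕ) : List (List ℕ) :=
  Nat.rec [[]] (fun _ ih => ih.flatMap fun w => (List.range b).map fun i => w ++ [i]) k

theorem mem_strs {b k : ℕ} {w : List ℕ} :
    w ∈ strs b k ↔ w.length = k ∧ ∀ x ∈ w, x < b := by
  induction k generalizing w with
  | zero =>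
    have : strs b 0 = [[]] := rfl
    rw [this, List.mem_singleton, List.length_eq_zero_iff]
    constructor
    · rintro rfl; simp
    · exact fun h => h.1
  | succ k ih =>
    have : strs b (k+1) =
      (strs b k).flatMap fun w => (List.range b).map fun i => w ++ [i] := rfl
    rw [this, List.mem_flatMap]
    constructor
    · rintro ⟨v, hv, h⟩
      rw [ih] at hv
      simp only [List.mem_map, List.mem_range] at h
      obtain ⟨i, hi, rfl⟩ := h
      refine ⟨by simp [hv.1], ?_⟩
      intro x hx
      rw [List.mem_append] at hx
      rcases hx with hx | hx
      · exact hv.2 x hx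
      · simp at hx; omega
    · rintro ⟨h1, h2⟩
      rcases List.eq_nil_or_concat w with rfl | ⟨v, i, rfl⟩
      · simp at h1
      · rw [List.concat_eq_append] at *
        refine ⟨v, ih.2 ⟨by simpa using h1, fun x hx => h2 x (by simp [hx])⟩, ?_⟩
        simp only [List.mem_map, List.mem_range]
        exact ⟨i, h2 i (by simp), rfl⟩

theorem primrec_strs (b : ℕ) : Primrec (strs b) := by
  unfold strs
  refine Primrec.nat_rec₁ (α := List (List ℕ)) (f := fun _ ih => ih.flatMap fun w => (List.range b).map fun i => w ++ [i]) [[]] ?_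
  refine Primrec.list_flatMap Primrec.snd ?_
  refine Primrec.list_map (Primrec.const _) ?_
  exact Primrec.list_append.comp (Primrec.snd.comp Primrec.fst)
    (Primrec.list_cons.comp Primrec.snd (Primrec.const []))

theorem pre_mem_strs {b k : ℕ} {W : ℕ → ℕ} (h : ∀ n, W n < b) : pre W k ∈ strs b k := by
  rw [mem_strs]
  refine ⟨by simp, fun x hx => ?_⟩
  simp only [pre, List.mem_map] at hx
  obtain ⟨i, -, rfl⟩ := hx
  exact h i

theorem take_mem_strs {b k j : ℕ} {w : List ℕ} (h : w ∈ strs b k) (hj : j ≤ k) :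
    w.take j ∈ strs b j := by
  rw [mem_strs] at *
  exact ⟨by simp [h.1, hj], fun x hx => h.2 x (List.mem_of_mem_take hx)⟩

theorem koenig {b : ℕ} {S : List ℕ → Prop} (hS : ∀ w j, S w → S (w.take j))
    (hinf : ∀ k, ∃ w ∈ strs b k, S w) :
    ∃ W : ℕ → ℕ, (∀ n, W n < b) ∧ ∀ k, S (pre W k) := by
  let I : List ℕ → Prop := fun w => ∀ k, ∃ v, S v ∧ v.length = w.length + k ∧
    (∀ x ∈ v, x < b) ∧ v.take w.length = w
  have I0 : I [] := by
    intro k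
    obtain ⟨w, hw, h⟩ := hinf k
    rw [mem_strs] at hw
    exact ⟨w, h, by simp [hw.1], hw.2, by simp⟩
  have step : ∀ w, I w → ∃ i, i < b ∧ I (w ++ [i]) := by
    intro w hw
    by_contra hcon
    push Not at hcon
    have : ∀ i, ∃ k, i < b → ¬ ∃ v, S v ∧ v.length = (w ++ [i]).length + k ∧
        (∀ x ∈ v, x < b) ∧ v.take (w ++ [i]).length = w ++ [i] := by
      intro i
      by_cases hi : i < b
      · have := hcon i hi
        simp only [I, not_forall] at this
        obtain ⟨k, hk⟩ := this
        exact ⟨k, fun _ => hk⟩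
      · exact ⟨0, fun h => absurd h hi⟩
    choose g hg using this
    obtain ⟨M, hM⟩ : ∃ M, ∀ i < b, g i ≤ M :=
      ⟨(Finset.range b).sup g, fun i hi => Finset.le_sup (f := g) (Finset.mem_range.2 hi)⟩
    obtain ⟨v, hv, hl, hb, ht⟩ := hw (M + 1)
    have hlt : w.length < v.length := by omega
    have hib : v[w.length] < b := hb _ (List.getElem_mem _)
    refine hg v[w.length] hib ⟨v.take (w.length + 1 + g v[w.length]), hS _ _ hv, ?_, ?_, ?_⟩
    · have := hM _ hib
      simp; omega
    · exact fun x hx => hb x (List.mem_of_mem_take hx)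
    · rw [List.take_take]
      have : min (w ++ [v[w.length]]).length (w.length + 1 + g v[w.length]) = w.length + 1 := by
        simp
      rw [this, List.take_succ_eq_append_getElem hlt, ht]
  choose! nx hnx using step
  let s : ℕ → List ℕ := fun n => Nat.rec [] (fun _ w => w ++ [nx w]) n
  have hsI : ∀ n, I (s n) := by
    intro n
    induction n with
    | zero => exact I0
    | succ n ih => exact (hnx _ ih).2
  have hsS : ∀ n, S (s n) := by
    intro n
    obtain ⟨v, hv, -, -, h⟩ := hsI n 0
    rw [← h]
    exact hS _ _ hv
  have hs : ∀ n, s n = pre (fun i => nx (s i)) n := by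
    intro n
    induction n with
    | zero => rfl
    | succ n ih =>
      show s n ++ [nx (s n)] = _
      rw [show pre (fun i => nx (s i)) (n+1) = pre (fun i => nx (s i)) n ++ [nx (s n)] by
        simp [pre, List.range_succ], ← ih]
  refine ⟨fun i => nx (s i), fun n => (hnx _ (hsI n)).1, fun k => ?_⟩
  rw [← hs]
  exact hsS k

/-- Pointwise reducibility. -/
def PW (O f : ℕ → ℕ) : Prop := ∃ φ : ℕ → ℕ, Primrec φ ∧ ∀ n, f n = φ (O n)

theorem PW.refl (O : ℕ → ℕ) : PW O O := ⟨id, Primrec.id, fun _ => rfl⟩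

theorem PW.trans {O f g : ℕ → ℕ} (h1 : PW O f) (h2 : PW f g) : PW O g := by
  obtain ⟨φ, hφ, h1⟩ := h1
  obtain ⟨ψ, hψ, h2⟩ := h2
  exact ⟨fun n => ψ (φ n), hψ.comp hφ, fun n => by rw [h2, h1]⟩

theorem PW.left (O W : ℕ → ℕ) : PW (ot O W) O :=
  ⟨fun n => n.unpair.1, Primrec.fst.comp Primrec.unpair, fun n => by simp [ot]⟩

theorem PW.right (O W : ℕ → ℕ) : PW (ot O W) W :=
  ⟨fun n => n.unpair.2, Primrec.snd.comp Primrec.unpair, fun n => by simp [ot]⟩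

theorem PW.pair {O f g : ℕ → ℕ} (h1 : PW O f) (h2 : PW O g) : PW O (ot f g) := by
  obtain ⟨φ, hφ, h1⟩ := h1
  obtain ⟨ψ, hψ, h2⟩ := h2
  exact ⟨fun n => Nat.pair (φ n) (ψ n), Primrec₂.natPair.comp hφ hψ, fun n => by
    simp [ot, h1, h2]⟩

theorem PW.map2 {O f g : ℕ → ℕ} (h1 : PW O f) (h2 : PW O g) {F : ℕ → ℕ → ℕ}
    (hF : Primrec₂ F) : PW O (fun n => F (f n) (g n)) := by
  obtain ⟨φ, hφ, h1⟩ := h1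
  obtain ⟨ψ, hψ, h2⟩ := h2
  exact ⟨fun n => F (φ n) (ψ n), hF.comp hφ hψ, fun n => by
    simp [h1, h2]⟩

section LemmaA
variable (O : ℕ → ℕ)

/-- Forcing condition for the generic construction. -/
def PA (z : (ℕ × List ℕ) × ℕ) : Prop :=
  (∀ i ∈ Denumerable.ofNat (List ℕ) z.2, i < 3) ∧
  (Denumerable.ofNat (List ℕ) z.2).take z.1.2.length = z.1.2 ∧
  U (zp (pre O (Denumerable.ofNat (List ℕ) z.2).length) (Denumerable.ofNat (List ℕ) z.2), z.1.1)

theorem sigO_PA : SigO O (PA O) := by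
  have ht : Primrec (fun x : List ℕ × ((ℕ × List ℕ) × ℕ) =>
    Denumerable.ofNat (List ℕ) x.2.2) :=
    (Primrec.ofNat (List ℕ)).comp (Primrec.snd.comp Primrec.snd)
  have hs : Primrec (fun x : List ℕ × ((ℕ × List ℕ) × ℕ) => x.2.1.2) :=
    Primrec.snd.comp (Primrec.fst.comp Primrec.snd)
  have hn : Primrec (fun x : List ℕ × ((ℕ × List ℕ) × ℕ) => x.2.1.1) :=
    Primrec.fst.comp (Primrec.fst.comp Primrec.snd)
  have h1 : PrimrecPred (fun x : List ℕ × ((ℕ × List ℕ) × ℕ) =>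
      (∀ i ∈ Denumerable.ofNat (List ℕ) x.2.2, i < 3) ∧
      (Denumerable.ofNat (List ℕ) x.2.2).take x.2.1.2.length = x.2.1.2 ∧
      U (zp x.1 (Denumerable.ofNat (List ℕ) x.2.2), x.2.1.1)) := by
    refine PrimrecPred.and ?_ (PrimrecPred.and ?_ ?_)
    · refine primrec_ball_list (p := fun y => y.2 < 3) ?_ ht
      exact Primrec.nat_lt.comp Primrec.snd (Primrec.const 3)
    · exact Primrec.eq.comp (Primrec.list_take.comp (Primrec.list_length.comp hs) ht) hs
    · exact primrec_U.comp (Primrec.pair (primrec_zp.comp (Primrec.pair Primrec.fst ht)) hn)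
  exact SigO.of_dec (O := O) h1 (u := fun z => (Denumerable.ofNat (List ℕ) z.2).length)
    (Primrec.list_length.comp ((Primrec.ofNat (List ℕ)).comp Primrec.snd))

open Classical in
/-- Step of the generic construction. -/
noncomputable def stepA (n : ℕ) (s : List ℕ) : List ℕ :=
  if h : ∃ i, PA O ((n, s), i) then Denumerable.ofNat (List ℕ) (Nat.find h) ++ [0] else s ++ [0]

open Classical in
theorem graph_stepA (hO : Low O) :
    Sig2 (fun z : (ℕ × List ℕ) × List ℕ => stepA O z.1.1 z.1.2 = z.2) := by
  have s1 := hO.sig (sigO_PA O)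
  have s2 := hO.sig (sigO_PA O).exists
  have a1 : Sig2 (fun z : ((ℕ × List ℕ) × List ℕ) × ℕ => PA O (z.1.1, z.2)) :=
    s1.1.comp (f := fun z : ((ℕ × List ℕ) × List ℕ) × ℕ => (z.1.1, z.2))
      (Primrec.pair (Primrec.fst.comp Primrec.fst) Primrec.snd)
  have a2 : Sig2 (fun z : ((ℕ × List ℕ) × List ℕ) × ℕ => ∀ i < z.2, ¬ PA O (z.1.1, i)) := by
    refine Sig2.ball (p := fun y : (((ℕ × List ℕ) × List ℕ) × ℕ) × ℕ => ¬ PA O (y.1.1.1, y.2))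
      (s1.2.comp (f := fun y : (((ℕ × List ℕ) × List ℕ) × ℕ) × ℕ => (y.1.1.1, y.2)) ?_) Primrec.snd
    exact Primrec.pair (Primrec.fst.comp (Primrec.fst.comp Primrec.fst)) Primrec.snd
  have a3 : Sig2 (fun z : ((ℕ × List ℕ) × List ℕ) × ℕ =>
      Denumerable.ofNat (List ℕ) z.2 ++ [0] = z.1.2) := by
    refine Sig2.of_prim (Primrec.eq.comp (Primrec.list_append.comp
      ((Primrec.ofNat (List ℕ)).comp Primrec.snd) (Primrec.const [0])) ?_)
    exact Primrec.snd.comp Primrec.fst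
  have b1 : Sig2 (fun z : (ℕ × List ℕ) × List ℕ => ¬ ∃ i, PA O (z.1, i)) :=
    s2.2.comp (f := fun z : (ℕ × List ℕ) × List ℕ => z.1) Primrec.fst
  have b2 : Sig2 (fun z : (ℕ × List ℕ) × List ℕ => z.1.2 ++ [0] = z.2) := by
    refine Sig2.of_prim (Primrec.eq.comp (Primrec.list_append.comp
      (Primrec.snd.comp Primrec.fst) (Primrec.const [0])) Primrec.snd)
  refine (((a1.and a2).and a3).exists.or (b1.and b2)).of_eq ?_
  rintro ⟨⟨n, s⟩, t⟩
  simp only [stepA]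
  constructor
  · rintro (⟨i, ⟨h1, h2⟩, h3⟩ | ⟨h1, h2⟩)
    · rw [dif_pos ⟨i, h1⟩]
      have : Nat.find (⟨i, h1⟩ : ∃ i, PA O ((n, s), i)) = i := by
        rw [Nat.find_eq_iff]
        exact ⟨h1, fun m hm => h2 m hm⟩
      convert h3
    · rw [dif_neg h1]
      exact h2
  · intro h
    by_cases h1 : ∃ i, PA O ((n, s), i)
    · rw [dif_pos h1] at h
      exact Or.inl ⟨Nat.find h1, ⟨Nat.find_spec h1, fun i hi => Nat.find_min h1 hi⟩, h⟩
    · rw [dif_neg h1] at h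
      exact Or.inr ⟨h1, h⟩

open Classical in
theorem stepA_lt (n : ℕ) (s : List ℕ) (hs : ∀ i ∈ s, i < 3) : ∀ i ∈ stepA O n s, i < 3 := by
  intro i hi
  unfold stepA at hi
  split_ifs at hi with h
  · rw [List.mem_append] at hi
    rcases hi with hi | hi
    · exact (Nat.find_spec h).1 i hi
    · simp at hi; omega
  · rw [List.mem_append] at hi
    rcases hi with hi | hi
    · exact hs i hi
    · simp at hi; omega

open Classical in
theorem stepA_append (n : ℕ) (s : List ℕ) : ∃ t, stepA O n s = s ++ t ∧ t ≠ [] := by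
  unfold stepA
  split_ifs with h
  · have := (Nat.find_spec h).2.1
    simp only at this
    refine ⟨(Denumerable.ofNat (List ℕ) (Nat.find h)).drop s.length ++ [0], ?_, by simp⟩
    conv_lhs => rw [← List.take_append_drop s.length (Denumerable.ofNat (List ℕ) (Nat.find h))]
    rw [this, List.append_assoc]
  · exact ⟨[0], rfl, by simp⟩

open Classical in
theorem lemmaA (hO : Low O) : ∃ H : ℕ → ℕ, (∀ n, H n < 3) ∧ Low (ot O H) ∧
    ∀ n, ∃ m, ∀ H' : ℕ → ℕ, (∀ i, H' i < 3) → (∀ i < m, H' i = H i) →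
      K (ot O H') n → K (ot O H) n := by
  set s := iter (stepA O) with hs
  have hlt : ∀ n, ∀ i ∈ s n, i < 3 := by
    intro n
    induction n with
    | zero => simp [hs, iter]
    | succ n ih => exact stepA_lt O n _ ih
  have hpre : ∀ n m, n ≤ m → s n <+: s m := by
    intro n m h
    induction m, h using Nat.le_induction with
    | base => exact List.prefix_rfl
    | succ m _ ih =>
      obtain ⟨t, ht, -⟩ := stepA_append O m (s m)
      exact ih.trans ⟨t, ht.symm⟩
  have hlen : ∀ n, n ≤ (s n).length := by
    intro n
    induction n with
    | zero => simp
    | succ n ih =>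
      obtain ⟨t, ht, h0⟩ := stepA_append O n (s n)
      have : s (n+1) = s n ++ t := ht
      rw [this, List.length_append]
      have := List.length_pos_iff.2 h0
      omega
  let H : ℕ → ℕ := fun i => (s (i+1)).getD i 0
  have hget : ∀ n i, i < (s n).length → H i = (s n).getD i 0 := by
    intro n i hi
    have h1 : i < (s (i+1)).length := hlen (i+1)
    simp only [H, List.getD, List.getElem?_eq_getElem hi, List.getElem?_eq_getElem h1, Option.getD]
    rcases le_total n (i+1) with h | h
    · exact ((hpre _ _ h).getElem hi).symm
    · exact (hpre _ _ h).getElem h1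
  have hH : ∀ n, pre H (s n).length = s n := by
    intro n
    conv_rhs => rw [list_eq_pre (s n) 0]
    exact pre_congr fun i hi => hget n i hi
  have hH3 : ∀ n, H n < 3 := by
    intro n
    have h1 : n < (s (n+1)).length := hlen (n+1)
    simp only [H, List.getD, List.getElem?_eq_getElem h1, Option.getD]
    exact hlt _ _ (List.getElem_mem _)
  have key1 : ∀ n, ∀ H' : ℕ → ℕ, (∀ i, H' i < 3) → (∀ i < (s n).length, H' i = H i) →
      K (ot O H') n → ∃ i, PA O ((n, s n), i) := by
    rintro n H' h3 hag ⟨k, hk⟩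
    have hk' := U_mono (le_max_left k (s n).length) hk
    refine ⟨Encodable.encode (pre H' (max k (s n).length)), ?_⟩
    unfold PA
    simp only [Denumerable.ofNat_encode, pre_length]
    refine ⟨(mem_strs.1 (pre_mem_strs h3)).2, ?_, ?_⟩
    · rw [pre_take _ _ _ (le_max_right _ _), pre_congr hag, hH]
    · rw [zp_pre]
      exact hk'
  have key2 : ∀ n, (∃ i, PA O ((n, s n), i)) → K (ot O H) n := by
    intro n h
    have e : s (n+1) = Denumerable.ofNat (List ℕ) (Nat.find h) ++ [0] := by
      show stepA O n (s n) = _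
      unfold stepA
      rw [dif_pos h]
    obtain ⟨-, -, h3⟩ := Nat.find_spec h
    set t := Denumerable.ofNat (List ℕ) (Nat.find h) with ht
    have : pre H t.length = t := by
      have h4 := hH (n+1)
      rw [e] at h4
      have h5 := congrArg (List.take t.length) h4
      rw [pre_take _ _ _ (by simp)] at h5
      simpa using h5
    refine ⟨t.length, ?_⟩
    rw [← zp_pre, this]
    exact h3
  have hK : ∀ n, (∃ i, PA O ((n, s n), i)) ↔ K (ot O H) n :=
    fun n => ⟨key2 n, key1 n H hH3 fun _ _ => rfl⟩
  have s2 := hO.sig (sigO_PA O).exists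
  have g := graph_stepA O hO
  refine ⟨H, hH3, ⟨(Sig2.iter g s2.1).of_eq hK, (Sig2.iter g s2.2).of_eq fun n => not_congr (hK n)⟩,
    fun n => ⟨(s n).length, fun H' h3 hag h => key2 n (key1 n H' h3 hag h)⟩⟩

/-- Genericity in the form used below. -/
def Generic (O H : ℕ → ℕ) : Prop :=
  ∀ f, PW O f → ∀ R : List ℕ × List ℕ → Prop, PrimrecPred R → (∀ k, R (pre f k, pre H k)) →
    ∃ n, ∀ H' : ℕ → ℕ, (∀ i, H' i < 3) → (∀ i < n, H' i = H i) → ∀ k, R (pre f k, pre H' k)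

theorem lemmaA' (hO : Low O) : ∃ H : ℕ → ℕ, (∀ n, H n < 3) ∧ Low (ot O H) ∧ Generic O H := by
  obtain ⟨H, h3, hl, hg⟩ := lemmaA O hO
  refine ⟨H, h3, hl, ?_⟩
  rintro f ⟨φ, hφ, hf⟩ R hR hRH
  have h1 : PrimrecPred (fun q : List ℕ × ℕ =>
      ¬ R (q.1.map (fun v => φ v.unpair.1), q.1.map (fun v => v.unpair.2))) := by
    refine (hR.comp (Primrec.pair (Primrec.list_map Primrec.fst ?_)
      (Primrec.list_map Primrec.fst ?_))).not
    · exact hφ.comp (Primrec.fst.comp (Primrec.unpair.comp Primrec.snd))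
    · exact Primrec.snd.comp (Primrec.unpair.comp Primrec.snd)
  obtain ⟨e, he⟩ := K_universal h1
  have h2 : ∀ F, (∃ k, ¬ R (pre f k, pre F k)) ↔ K (ot O F) (Nat.pair e 0) := by
    intro F
    rw [← he]
    have : (fun n => φ (O n)) = f := funext fun n => (hf n).symm
    simp only [pre_map, ot, Nat.unpair_pair, this]
  obtain ⟨m, hm⟩ := hg (Nat.pair e 0)
  refine ⟨m, fun H' h3' hag k => ?_⟩
  by_contra hcon
  obtain ⟨k', hk'⟩ := (h2 _).2 (hm H' h3' hag ((h2 _).1 ⟨k, hcon⟩))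
  exact hk' (hRH k')
end LemmaA

section LemmaB

/-- The finite-level condition in the low basis theorem. -/
def CB (φ : ℕ → ℕ) (R : List ℕ × List ℕ → Prop) (b : ℕ) (q : List ℕ × List ℕ × ℕ) : Prop :=
  ∃ w ∈ strs b q.2.2, (∀ j < q.2.2 + 1, R ((q.1.take j).map φ, w.take j)) ∧
    ∀ i ∈ q.2.1, ¬ U (zp q.1 w, i)

theorem primrec_CB {φ : ℕ → ℕ} (hφ : Primrec φ) {R : List ℕ × List ℕ → Prop} (hR : PrimrecPred R)
    (b : ℕ) : PrimrecPred (CB φ R b) := by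
  unfold CB
  refine primrec_bex_list (p := fun z : (List ℕ × List ℕ × ℕ) × List ℕ =>
    (∀ j < z.1.2.2 + 1, R ((z.1.1.take j).map φ, z.2.take j)) ∧
    ∀ i ∈ z.1.2.1, ¬ U (zp z.1.1 z.2, i)) (PrimrecPred.and ?_ ?_)
    ((primrec_strs b).comp (Primrec.snd.comp Primrec.snd))
  · refine primrec_ball (p := fun y : ((List ℕ × List ℕ × ℕ) × List ℕ) × ℕ =>
      R ((y.1.1.1.take y.2).map φ, y.1.2.take y.2)) (hR.comp (Primrec.pair ?_ ?_)) ?_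
    · exact Primrec.list_map (Primrec.list_take.comp Primrec.snd
        (Primrec.fst.comp (Primrec.fst.comp Primrec.fst))) (hφ.comp Primrec.snd)
    · exact Primrec.list_take.comp Primrec.snd (Primrec.snd.comp Primrec.fst)
    · exact Primrec.succ.comp (Primrec.snd.comp (Primrec.snd.comp Primrec.fst))
  · refine primrec_ball_list (p := fun y : ((List ℕ × List ℕ × ℕ) × List ℕ) × ℕ =>
      ¬ U (zp y.1.1.1 y.1.2, y.2)) (PrimrecPred.not (primrec_U.comp (Primrec.pair ?_ Primrec.snd))) ?_
    · exact primrec_zp.comp (Primrec.pair (Primrec.fst.comp (Primrec.fst.comp Primrec.fst))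
        (Primrec.snd.comp Primrec.fst))
    · exact Primrec.fst.comp (Primrec.snd.comp Primrec.fst)

open Classical in
theorem lemmaB {O : ℕ → ℕ} (hO : Low O) {f : ℕ → ℕ} (hf : PW O f) {R : List ℕ × List ℕ → Prop}
    (hR : PrimrecPred R) (b : ℕ)
    (hne : ∀ k, ∃ w ∈ strs b k, ∀ j ≤ k, R (pre f j, w.take j)) :
    ∃ W : ℕ → ℕ, (∀ n, W n < b) ∧ (∀ k, R (pre f k, pre W k)) ∧ Low (ot O W) := by
  obtain ⟨φ, hφ, hf⟩ := hf
  have hfm : ∀ k j, j ≤ k → ((pre O k).take j).map φ = pre f j := by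
    intro k j h
    rw [pre_take _ _ _ h, pre_map]
    exact pre_congr fun i _ => (hf i).symm
  let C : List ℕ → Prop := fun D => ∀ k, CB φ R b (pre O k, D, k)
  let st : ℕ → List ℕ → List ℕ := fun n D => if C (n :: D) then n :: D else D
  -- complexity
  have c1 : SigO O (fun D : List ℕ => ∃ k, ¬ CB φ R b (pre O k, D, k)) := by
    refine SigO.exists (p := fun x : List ℕ × ℕ => ¬ CB φ R b (pre O x.2, x.1, x.2)) ?_
    exact SigO.of_dec (O := O) (R := fun z : List ℕ × (List ℕ × ℕ) => ¬ CB φ R b z)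
      (primrec_CB hφ hR b).not (u := fun x => x.2) Primrec.snd
  have c2 := hO.sig c1
  have cC : Sig2 C := c2.2.of_eq fun D => by simp [C]
  have cnC : Sig2 (fun D => ¬ C D) := c2.1.of_eq fun D => by simp [C]
  have hcons : Primrec (fun z : (ℕ × List ℕ) × List ℕ => z.1.1 :: z.1.2) :=
    Primrec.list_cons.comp (Primrec.fst.comp Primrec.fst) (Primrec.snd.comp Primrec.fst)
  have hcons' : Primrec (fun z : ℕ × List ℕ => z.1 :: z.2) :=
    Primrec.list_cons.comp Primrec.fst Primrec.snd
  have g : Sig2 (fun z : (ℕ × List ℕ) × List ℕ => st z.1.1 z.1.2 = z.2) := by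
    refine (((cC.comp hcons).and (Sig2.of_prim (Primrec.eq.comp hcons Primrec.snd))).or
      ((cnC.comp hcons).and (Sig2.of_prim (Primrec.eq.comp (Primrec.snd.comp Primrec.fst)
        Primrec.snd)))).of_eq ?_
    intro z
    simp only [st]
    by_cases h : C (z.1.1 :: z.1.2) <;> simp [h]
  set D := iter st with hD
  have hDs : ∀ n, D (n+1) = if C (n :: D n) then n :: D n else D n := fun n => rfl
  have hmono : ∀ n m, n ≤ m → ∀ i ∈ D n, i ∈ D m := by
    intro n m h
    induction m, h using Nat.le_induction with
    | base => exact fun _ h => h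
    | succ m _ ih =>
      intro i hi
      rw [hDs]
      split_ifs
      · exact List.mem_cons_of_mem _ (ih i hi)
      · exact ih i hi
  have hC : ∀ n, C (D n) := by
    intro n
    induction n with
    | zero =>
      intro k
      obtain ⟨w, hw, h⟩ := hne k
      refine ⟨w, hw, fun j hj => ?_, by simp [hD, iter]⟩
      simp only at hj ⊢
      rw [hfm _ _ (by omega)]
      exact h j (by omega)
    | succ n ih =>
      rw [hDs]
      split_ifs with h
      · exact h
      · exact ih
  have zpt : ∀ (w : List ℕ), zp (pre O w.length) w = pre (ot O fun i => w.getD i 0) w.length := by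
    intro w
    conv_lhs => rw [list_eq_pre w 0]
    rw [pre_length, zp_pre]
  obtain ⟨W, hWb, hW⟩ := koenig (b := b) (S := fun w => (∀ j ≤ w.length, R (pre f j, w.take j)) ∧
    ∀ i ∈ D w.length, ¬ U (zp (pre O w.length) w, i)) (by
      rintro w j ⟨h1, h2⟩
      rcases le_total w.length j with hj | hj
      · rw [List.take_of_length_le hj]
        exact ⟨h1, h2⟩
      · have hl : (w.take j).length = j := by simp [hj]
        rw [hl]
        refine ⟨fun i hi => ?_, fun i hi hU => ?_⟩
        · rw [List.take_take, min_eq_left hi]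
          exact h1 i (by omega)
        · refine h2 i (hmono _ _ hj i hi) ?_
          rw [zpt]
          have : w.take j = pre (fun i => w.getD i 0) j := by
            conv_lhs => rw [list_eq_pre w 0]
            rw [pre_take _ _ _ hj]
          rw [this, zp_pre] at hU
          exact U_mono hj hU)
    (by
      intro k
      obtain ⟨w, hw, h1, h2⟩ := hC k k
      have hl := (mem_strs.1 hw).1
      simp only at hl
      refine ⟨w, hw, ?_, ?_⟩
      · rw [hl]
        intro j hj
        have := h1 j (by simp only; omega)
        simp only at this
        rwa [hfm _ _ hj] at this
      · rw [hl]
        exact h2)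
  simp only [pre_length, zp_pre] at hW
  have hWR : ∀ k, R (pre f k, pre W k) := by
    intro k
    have := (hW k).1 k le_rfl
    rwa [pre_take _ _ _ le_rfl] at this
  have hout : ∀ n, ∀ i ∈ D n, ¬ K (ot O W) i := by
    rintro n i hi ⟨k, hk⟩
    exact (hW (max k n)).2 i (hmono _ _ (le_max_right _ _) i hi) (U_mono (le_max_left _ _) hk)
  have hK : ∀ n, ¬ C (n :: D n) ↔ K (ot O W) n := by
    intro n
    constructor
    · intro h
      by_contra hcon
      apply h
      intro k
      refine ⟨pre W k, pre_mem_strs hWb, fun j hj => ?_, ?_⟩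
      · simp only at hj ⊢
        rw [hfm _ _ (by omega), pre_take _ _ _ (by omega)]
        exact hWR j
      · intro i hi hU
        simp only [zp_pre] at hi hU
        rcases List.mem_cons.1 hi with rfl | hi
        · exact hcon ⟨k, hU⟩
        · exact hout n i hi ⟨k, hU⟩
    · intro h hCn
      refine hout (n+1) n ?_ h
      rw [hDs, if_pos hCn]
      simp
  refine ⟨W, hWb, hWR, ⟨?_, ?_⟩⟩
  · exact (Sig2.iter (A := fun z => ¬ C (z.1 :: z.2)) g (cnC.comp hcons')).of_eq hK
  · refine (Sig2.iter (A := fun z => C (z.1 :: z.2)) g (cC.comp hcons')).of_eq fun n => ?_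
    rw [← hK, not_not]

end LemmaB

end Paper

namespace Paper

/-! ### The combinatorial core -/

/-- Binary digit `s` of `v`. -/
def bit (s v : ℕ) : ℕ := v / 2 ^ s % 2

theorem primrec_pow2 : Primrec (fun s : ℕ => 2 ^ s) := by
  refine (Primrec.nat_rec₁ (f := fun _ ih => ih * 2) 1 ?_).of_eq fun n => ?_
  · exact Primrec.nat_mul.comp Primrec.snd (Primrec.const 2)
  · induction n with
    | zero => rfl
    | succ n ih =>
      rw [pow_succ, ← ih]

theorem primrec_bit : Primrec₂ bit := by
  unfold bit
  exact Primrec.nat_mod.comp (Primrec.nat_div.comp Primrec.snd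
    (primrec_pow2.comp Primrec.fst)) (Primrec.const 2)

theorem bit_lt (s v : ℕ) : bit s v < 2 := Nat.mod_lt _ (by norm_num)

/-- Agreement of digits in `L` beyond `m`. -/
def AG (L : List ℕ) (m : ℕ) (y z : List ℕ) : Prop :=
  ∀ s ∈ L, ∀ i < y.length, m ≤ i → bit s (y.getD i 0) = bit s (z.getD i 0)

theorem primrec_AG (L : List ℕ) (m : ℕ) : PrimrecPred (fun q : List ℕ × List ℕ => AG L m q.1 q.2) := by
  unfold AG
  refine primrec_ball_list (p := fun x : (List ℕ × List ℕ) × ℕ => ∀ i < x.1.1.length, m ≤ i →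
    bit x.2 (x.1.1.getD i 0) = bit x.2 (x.1.2.getD i 0)) ?_ (Primrec.const L)
  refine primrec_ball (p := fun x : ((List ℕ × List ℕ) × ℕ) × ℕ => m ≤ x.2 →
    bit x.1.2 (x.1.1.1.getD x.2 0) = bit x.1.2 (x.1.1.2.getD x.2 0)) ?_
    (Primrec.list_length.comp (Primrec.fst.comp Primrec.fst))
  refine PrimrecPred.of_eq (p := fun x : ((List ℕ × List ℕ) × ℕ) × ℕ => ¬ m ≤ x.2 ∨
    bit x.1.2 (x.1.1.1.getD x.2 0) = bit x.1.2 (x.1.1.2.getD x.2 0))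
    (PrimrecPred.or (PrimrecPred.not ?_) ?_) (fun x => by tauto)
  · exact Primrec.nat_le.comp (Primrec.const m) Primrec.snd
  · refine Primrec.eq.comp (primrec_bit.comp ?_ ?_) (primrec_bit.comp ?_ ?_)
    · exact Primrec.snd.comp Primrec.fst
    · exact (Primrec.list_getD 0).comp (Primrec.fst.comp (Primrec.fst.comp Primrec.fst)) Primrec.snd
    · exact Primrec.snd.comp Primrec.fst
    · exact (Primrec.list_getD 0).comp (Primrec.snd.comp (Primrec.fst.comp Primrec.fst)) Primrec.snd

theorem AG_take {L : List ℕ} {m : ℕ} {y z : List ℕ} (h : AG L m y z) (j : ℕ)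
    (hz : y.length ≤ z.length) : AG L m (y.take j) (z.take j) := by
  intro s hs i hi hm
  rw [List.length_take] at hi
  have h1 : i < j := by omega
  have := h s hs i (by omega) hm
  simpa [List.getD, List.getElem?_take, h1] using this

theorem AG_mono {L : List ℕ} {m m' : ℕ} {y z : List ℕ} (h : AG L m y z) (hm : m ≤ m') :
    AG L m' y z := fun s hs i hi h' => h s hs i hi (hm.trans h')

theorem AG_pre {L : List ℕ} {m : ℕ} {Y Z : ℕ → ℕ} :
    (∀ k, AG L m (pre Y k) (pre Z k)) ↔ ∀ s ∈ L, ∀ n, m ≤ n → bit s (Y n) = bit s (Z n) := by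
  constructor
  · intro h s hs n hn
    have := h (n+1) s hs n (by simp) hn
    rwa [pre_get _ _ _ (by omega), pre_get _ _ _ (by omega)] at this
  · intro h k s hs i hi hm
    rw [pre_length] at hi
    rw [pre_get _ _ _ hi, pre_get _ _ _ hi]
    exact h s hs i hm

/-- Overwrite by a finite word. -/
def fr (ρ : List ℕ) (x : ℕ → ℕ) (n : ℕ) : ℕ := if n < ρ.length then ρ.getD n 0 else x n

/-- Switch. -/
def sw (a h : ℕ → ℕ) (n : ℕ) : ℕ := if a n = 0 then h n else 0

/-- Merge. -/
def mg (a h : ℕ → ℕ) (n : ℕ) : ℕ := if a n = 0 then h n else a n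

/-- A word as a function. -/
def fn (l : List ℕ) (n : ℕ) : ℕ := l.getD n 0

theorem primrec_pre {α : Type} [Primcodable α] {F : α → ℕ → ℕ} (hF : Primrec₂ F) {k : α → ℕ}
    (hk : Primrec k) : Primrec (fun a => pre (F a) (k a)) := by
  unfold pre
  exact Primrec.list_map (Primrec.list_range.comp hk) hF

theorem primrec_fn : Primrec₂ fn := by
  unfold fn
  exact Primrec.list_getD 0

theorem primrec_fr {α : Type} [Primcodable α] (ρ : List ℕ) {F : α → ℕ → ℕ} (hF : Primrec₂ F) :
    Primrec₂ (fun a => fr ρ (F a)) := by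
  unfold fr
  refine Primrec.ite (Primrec.nat_lt.comp Primrec.snd (Primrec.const _)) ?_ hF
  exact (Primrec.list_getD 0).comp (Primrec.const ρ) Primrec.snd

theorem primrec_sw {α : Type} [Primcodable α] {F G : α → ℕ → ℕ} (hF : Primrec₂ F)
    (hG : Primrec₂ G) : Primrec₂ (fun a => sw (F a) (G a)) := by
  unfold sw
  exact Primrec.ite (Primrec.eq.comp hF (Primrec.const _)) hG (Primrec.const 0)

theorem primrec_mg {α : Type} [Primcodable α] {F G : α → ℕ → ℕ} (hF : Primrec₂ F)
    (hG : Primrec₂ G) : Primrec₂ (fun a => mg (F a) (G a)) := by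
  unfold mg
  exact Primrec.ite (Primrec.eq.comp hF (Primrec.const _)) hG hF

theorem fn_pre {x : ℕ → ℕ} {k i : ℕ} (h : i < k) : fn (pre x k) i = x i := pre_get _ _ _ h _

theorem fn_lt {b k : ℕ} (hb : 0 < b) {w : List ℕ} (h : w ∈ strs b k) (n : ℕ) : fn w n < b := by
  unfold fn
  by_cases hn : n < w.length
  · simp only [List.getD, List.getElem?_eq_getElem hn, Option.getD]
    exact (mem_strs.1 h).2 _ (List.getElem_mem _)
  · rw [List.getD_eq_default _ _ (by omega)]
    exact hb

theorem fr_lt {ρ : List ℕ} {b : ℕ} (h : ∀ x ∈ ρ, x < b) {x : ℕ → ℕ} (hx : ∀ n, x n < b) (n : ℕ) :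
    fr ρ x n < b := by
  unfold fr
  split_ifs with hn
  · simp only [List.getD, List.getElem?_eq_getElem hn, Option.getD]
    exact h _ (List.getElem_mem _)
  · exact hx n

theorem sw_lt {a h : ℕ → ℕ} (hh : ∀ n, h n < 3) (n : ℕ) : sw a h n < 3 := by
  unfold sw
  split_ifs
  · exact hh n
  · omega

theorem mg_lt {a h : ℕ → ℕ} (ha : ∀ n, a n < 3) (hh : ∀ n, h n < 3) (n : ℕ) : mg a h n < 3 := by
  unfold mg
  split_ifs
  · exact hh n
  · exact ha n

theorem low_id : Low (fun n => n) := by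
  have h : ∀ k, pre (fun n => n) k = List.range k := fun k => by simp [pre]
  have h1 : PrimrecPred (fun y : (ℕ × ℕ) × ℕ => U (pre (fun n => n) y.1.2, y.1.1)) := by
    simp only [h]
    exact primrec_U.comp (Primrec.pair (Primrec.list_range.comp (Primrec.snd.comp Primrec.fst))
      (Primrec.fst.comp Primrec.fst))
  have h2 : PrimrecPred (fun y : (ℕ × ℕ) × ℕ => ¬ U (pre (fun n => n) y.2, y.1.1)) := by
    simp only [h]
    exact (primrec_U.comp (Primrec.pair (Primrec.list_range.comp Primrec.snd)
      (Primrec.fst.comp Primrec.fst))).not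
  exact ⟨⟨_, h1, fun n => by simp [K]⟩, ⟨_, h2, fun n => by simp [K]⟩⟩

/-- Approximation by eventually-zero sequences. -/
def Approx (a : ℕ → ℕ) : Prop := ∀ R : List ℕ → Prop, PrimrecPred R → (∀ k, R (pre a k)) →
  ∃ a' : ℕ → ℕ, (∀ n, a' n < 3) ∧ (∃ N, ∀ n, N ≤ n → a' n = 0) ∧ ∀ k, R (pre a' k)

theorem Approx.step {O a H : ℕ → ℕ} (ha : Approx a) (hpa : PW O a) (hg : Generic O H)
    (h3 : ∀ n, H n < 3) : Approx (mg a H) := by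
  intro R hR hk
  have e : ∀ (f g : ℕ → ℕ) k, pre (mg (fn (pre f k)) (fn (pre g k))) k = pre (mg f g) k := by
    intro f g k
    refine pre_congr fun i hi => ?_
    simp only [mg, fn_pre hi]
  have hR1 : PrimrecPred (fun q : List ℕ × List ℕ => R (pre (mg (fn q.1) (fn q.2)) q.1.length)) := by
    refine hR.comp (primrec_pre (F := fun q : List ℕ × List ℕ => mg (fn q.1) (fn q.2)) ?_
      (Primrec.list_length.comp Primrec.fst))
    exact primrec_mg (F := fun q : List ℕ × List ℕ => fn q.1) (G := fun q => fn q.2)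
      (primrec_fn.comp (Primrec.fst.comp Primrec.fst) Primrec.snd)
      (primrec_fn.comp (Primrec.snd.comp Primrec.fst) Primrec.snd)
  obtain ⟨n, hn⟩ := hg a hpa _ hR1 (fun k => by
    simp only [pre_length, e]; exact hk k)
  set θ := pre H n with hθ
  have hθ3 : ∀ x ∈ θ, x < 3 := (mem_strs.1 (pre_mem_strs h3)).2
  have hn' := hn (fr θ fun _ => 0) (fr_lt hθ3 fun _ => by norm_num) (fun i hi => by
    simp only [fr, hθ, pre_length, if_pos hi, pre_get _ _ _ hi])
  simp only [pre_length, e] at hn'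
  have hR2 : PrimrecPred (fun l : List ℕ => R (pre (mg (fn l) (fr θ fun _ => 0)) l.length)) := by
    refine hR.comp (primrec_pre (F := fun l : List ℕ => mg (fn l) (fr θ fun _ => 0)) ?_
      Primrec.list_length)
    refine primrec_mg (F := fun l : List ℕ => fn l) (G := fun _ => fr θ fun _ => 0)
      primrec_fn ?_
    exact primrec_fr (α := List ℕ) θ (F := fun _ _ => 0) (Primrec.const 0)
  have e2 : ∀ (f g : ℕ → ℕ) k, pre (mg (fn (pre f k)) g) k = pre (mg f g) k := by
    intro f g k
    refine pre_congr fun i hi => ?_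
    simp only [mg, fn_pre hi]
  obtain ⟨a', ha3, ⟨N, hN⟩, h⟩ := ha _ hR2 (fun k => by simp only [pre_length, e2]; exact hn' k)
  simp only [pre_length, e2] at h
  refine ⟨_, mg_lt ha3 (fr_lt hθ3 fun _ => by norm_num), ⟨max N n, fun i hi => ?_⟩, h⟩
  have h1 := hN i (le_trans (le_max_left _ _) hi)
  have h2 : ¬ i < n := by have := le_trans (le_max_right _ _) hi; omega
  simp [mg, h1, fr, hθ, h2]

theorem approx_zero : Approx (fun _ => 0) := fun _ _ h =>
  ⟨fun _ => 0, fun _ => by norm_num, ⟨0, fun _ _ => rfl⟩, h⟩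

section core
variable (B : ℕ) (TT : List ℕ × List ℕ → Prop)

/-- The digits in `L` can be locked below `ρ`. -/
def Locked (L ρ : List ℕ) : Prop :=
  ∀ k, ∃ z ∈ strs B k, ∀ x ∈ strs 3 k, ∃ y ∈ strs B k,
    TT (pre (fr ρ (fn x)) k, y) ∧ AG L ρ.length y z

/-- `Z` locks the digits in `L` below `ρ`. -/
def LockedBy (L ρ : List ℕ) (Z : ℕ → ℕ) : Prop :=
  ∀ x : ℕ → ℕ, (∀ n, x n < 3) → ∀ k, ∃ y ∈ strs B k,
    TT (pre (fr ρ x) k, y) ∧ AG L ρ.length y (pre Z k)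

variable {B TT}

theorem pre_fr_fn (ρ : List ℕ) (x : ℕ → ℕ) (k : ℕ) :
    pre (fr ρ (fn (pre x k))) k = pre (fr ρ x) k := by
  refine pre_congr fun i hi => ?_
  simp only [fr, fn_pre hi]

theorem exists_Z (hprim : PrimrecPred TT)
    (hmono : ∀ x y j, TT (x, y) → TT (x.take j, y.take j)) {L ρ : List ℕ}
    (hL : Locked B TT L ρ) :
    ∃ O Z : ℕ → ℕ, Low O ∧ PW O (fun n => n) ∧ PW O Z ∧ LockedBy B TT L ρ Z := by
  have hR : PrimrecPred (fun q : List ℕ × List ℕ => ∀ x ∈ strs 3 q.2.length,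
      ∃ y ∈ strs B q.2.length, TT (pre (fr ρ (fn x)) q.2.length, y) ∧ AG L ρ.length y q.2) := by
    refine primrec_ball_list (p := fun q : (List ℕ × List ℕ) × List ℕ =>
      ∃ y ∈ strs B q.1.2.length, TT (pre (fr ρ (fn q.2)) q.1.2.length, y) ∧ AG L ρ.length y q.1.2)
      ?_ ((primrec_strs 3).comp (Primrec.list_length.comp Primrec.snd))
    refine primrec_bex_list (p := fun q : ((List ℕ × List ℕ) × List ℕ) × List ℕ =>
      TT (pre (fr ρ (fn q.1.2)) q.1.1.2.length, q.2) ∧ AG L ρ.length q.2 q.1.1.2)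
      (PrimrecPred.and ?_ ?_)
      ((primrec_strs B).comp (Primrec.list_length.comp (Primrec.snd.comp Primrec.fst)))
    · refine hprim.comp (Primrec.pair ?_ Primrec.snd)
      refine primrec_pre (F := fun q : ((List ℕ × List ℕ) × List ℕ) × List ℕ => fr ρ (fn q.1.2)) ?_
        (Primrec.list_length.comp (Primrec.snd.comp (Primrec.fst.comp Primrec.fst)))
      exact primrec_fr ρ (F := fun q : ((List ℕ × List ℕ) × List ℕ) × List ℕ => fn q.1.2)
        (primrec_fn.comp (Primrec.snd.comp (Primrec.fst.comp Primrec.fst)) Primrec.snd)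
    · exact (primrec_AG L ρ.length).comp (Primrec.pair Primrec.snd
        (Primrec.snd.comp (Primrec.fst.comp Primrec.fst)))
  obtain ⟨Z, hZB, hZ, hlow⟩ := lemmaB low_id (PW.refl _) hR B (by
    intro k
    obtain ⟨z, hz, h⟩ := hL k
    refine ⟨z, hz, fun j hj x hx => ?_⟩
    have hzl := (mem_strs.1 hz).1
    have hl : (z.take j).length = j := by simp [hzl, hj]
    simp only [hl] at hx ⊢
    obtain ⟨y, hy, h1, h2⟩ := h (pre (fn x) k) (pre_mem_strs (fn_lt (by norm_num) hx))
    rw [pre_fr_fn] at h1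
    refine ⟨y.take j, take_mem_strs hy hj, ?_, AG_take h2 j ?_⟩
    · have := hmono _ _ j h1
      rwa [pre_take _ _ _ hj] at this
    · rw [(mem_strs.1 hy).1, hzl])
  refine ⟨_, Z, hlow, PW.left _ _, PW.right _ _, fun x hx k => ?_⟩
  obtain ⟨y, hy, h1, h2⟩ := hZ k (pre x k) (by simpa using pre_mem_strs hx)
  simp only [pre_length] at hy h1
  rw [pre_fr_fn] at h1
  exact ⟨y, hy, h1, h2⟩

theorem exists_Y (hprim : PrimrecPred TT)
    (hmono : ∀ x y j, TT (x, y) → TT (x.take j, y.take j)) {L ρ : List ℕ} {Z : ℕ → ℕ}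
    (hL : LockedBy B TT L ρ Z) {O : ℕ → ℕ} (hO : Low O) (hid : PW O (fun n => n)) (hZ : PW O Z)
    {x : ℕ → ℕ} (hx : PW O x) (hx3 : ∀ n, x n < 3) :
    ∃ Y : ℕ → ℕ, (∀ n, Y n < B) ∧ Low (ot O Y) ∧ (∀ k, TT (pre (fr ρ x) k, pre Y k)) ∧
      ∀ s ∈ L, ∀ n, ρ.length ≤ n → bit s (Y n) = bit s (Z n) := by
  have hR : PrimrecPred (fun q : List ℕ × List ℕ => TT (pre (fr ρ (fn (q.1.map fun v => v.unpair.1)))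
      q.2.length, q.2) ∧ AG L ρ.length q.2 (q.1.map fun v => v.unpair.2)) := by
    have m1 : Primrec (fun q : List ℕ × List ℕ => q.1.map fun v => v.unpair.1) :=
      Primrec.list_map Primrec.fst (Primrec.fst.comp (Primrec.unpair.comp Primrec.snd))
    have m2 : Primrec (fun q : List ℕ × List ℕ => q.1.map fun v => v.unpair.2) :=
      Primrec.list_map Primrec.fst (Primrec.snd.comp (Primrec.unpair.comp Primrec.snd))
    refine PrimrecPred.and (hprim.comp (Primrec.pair ?_ Primrec.snd))
      ((primrec_AG L ρ.length).comp (Primrec.pair Primrec.snd m2))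
    refine primrec_pre (F := fun q : List ℕ × List ℕ => fr ρ (fn (q.1.map fun v => v.unpair.1))) ?_
        (Primrec.list_length.comp Primrec.snd)
    exact primrec_fr ρ (F := fun q : List ℕ × List ℕ => fn (q.1.map fun v => v.unpair.1))
        (primrec_fn.comp (m1.comp Primrec.fst) Primrec.snd)
  have e1 : ∀ k, (pre (ot x Z) k).map (fun v => v.unpair.1) = pre x k := by
    intro k; rw [pre_map]; exact pre_congr fun i _ => by simp [ot]
  have e2 : ∀ k, (pre (ot x Z) k).map (fun v => v.unpair.2) = pre Z k := by
    intro k; rw [pre_map]; exact pre_congr fun i _ => by simp [ot]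
  obtain ⟨Y, hYB, hY, hlow⟩ := lemmaB hO (hx.pair hZ) hR B (by
    intro k
    obtain ⟨y, hy, h1, h2⟩ := hL x hx3 k
    refine ⟨y, hy, fun j hj => ?_⟩
    have hyl := (mem_strs.1 hy).1
    have hl : (y.take j).length = j := by simp [hyl, hj]
    simp only [hl, e1, e2, pre_fr_fn]
    constructor
    · have := hmono _ _ j h1
      rwa [pre_take _ _ _ hj] at this
    · have := AG_take h2 j (by simp [hyl])
      rwa [pre_take _ _ _ hj] at this)
  simp only [e1, e2, pre_fr_fn, pre_length] at hY
  exact ⟨Y, hYB, hlow, fun k => (hY k).1, AG_pre.1 fun k => (hY k).2⟩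

/-- A stage of the chain construction. -/
structure St (Z : ℕ → ℕ) where
  O : ℕ → ℕ
  a : ℕ → ℕ
  low : Low O
  pid : PW O (fun n => n)
  pZ : PW O Z
  pa : PW O a
  a3 : ∀ n, a n < 3

theorem PW_sw {O a h : ℕ → ℕ} (h1 : PW O a) (h2 : PW O h) : PW O (sw a h) := by
  refine PW.map2 (F := fun u v => if u = 0 then v else 0) h1 h2 ?_
  exact Primrec.ite (Primrec.eq.comp Primrec.fst (Primrec.const 0)) Primrec.snd (Primrec.const 0)

theorem PW_mg {O a h : ℕ → ℕ} (h1 : PW O a) (h2 : PW O h) : PW O (mg a h) := by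
  refine PW.map2 (F := fun u v => if u = 0 then v else u) h1 h2 ?_
  exact Primrec.ite (Primrec.eq.comp Primrec.fst (Primrec.const 0)) Primrec.snd Primrec.fst

theorem PW_fr {O x : ℕ → ℕ} (ρ : List ℕ) (h1 : PW O (fun n => n)) (h2 : PW O x) :
    PW O (fr ρ x) := by
  refine PW.map2 (F := fun u v => if u < ρ.length then ρ.getD u 0 else v) h1 h2 ?_
  exact Primrec.ite (Primrec.nat_lt.comp Primrec.fst (Primrec.const _))
    ((Primrec.list_getD 0).comp (Primrec.const ρ) Primrec.fst) Primrec.snd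

theorem chain_step (hprim : PrimrecPred TT)
    (hmono : ∀ x y j, TT (x, y) → TT (x.take j, y.take j)) {L ρ : List ℕ} {Z : ℕ → ℕ}
    (hL : LockedBy B TT L ρ Z) (S : St Z) :
    ∃ (S' : St Z) (H Y : ℕ → ℕ), (∀ n, H n < 3) ∧ Generic S.O H ∧ PW S'.O S.O ∧ PW S'.O H ∧
      PW S'.O Y ∧ (∀ n, Y n < B) ∧ (∀ k, TT (pre (fr ρ (sw S.a H)) k, pre Y k)) ∧
      (∀ s ∈ L, ∀ n, ρ.length ≤ n → bit s (Y n) = bit s (Z n)) ∧ S'.a = mg S.a H := by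
  obtain ⟨H, h3, hlow, hg⟩ := lemmaA' S.O S.low
  have l1 := PW.left S.O H
  have l2 := PW.right S.O H
  obtain ⟨Y, hY, hlow', hT, hA⟩ := exists_Y hprim hmono hL hlow (l1.trans S.pid) (l1.trans S.pZ)
    (PW_sw (l1.trans S.pa) l2) (sw_lt h3)
  have k1 := PW.left (ot S.O H) Y
  have k2 := PW.right (ot S.O H) Y
  exact ⟨⟨_, mg S.a H, hlow', k1.trans (l1.trans S.pid), k1.trans (l1.trans S.pZ),
    k1.trans (PW_mg (l1.trans S.pa) l2), mg_lt S.a3 h3⟩, H, Y, h3, hg, k1.trans l1, k1.trans l2, k2,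
    hY, hT, hA, rfl⟩

/-- The key contradiction: two stages of the chain with a common extra locked digit allow one
to lock that digit as well. -/
theorem extend_lock (hprim : PrimrecPred TT) {L ρ : List ℕ} {Z : ℕ → ℕ} {O a H Y Y' : ℕ → ℕ}
    (hρ : ∀ x ∈ ρ, x < 3)
    (ha : Approx a) (hpa : PW O a) (hpZ : PW O Z) (hpY' : PW O Y') (hg : Generic O H)
    (h3 : ∀ n, H n < 3) (hYB : ∀ n, Y n < B) (hT : ∀ k, TT (pre (fr ρ (sw a H)) k, pre Y k))
    (hA : ∀ s ∈ L, ∀ n, ρ.length ≤ n → bit s (Y n) = bit s (Z n)) {s m : ℕ}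
    (hm : ∀ n, m ≤ n → bit s (Y n) = bit s (Y' n)) :
    ∃ τ : List ℕ, (∀ x ∈ τ, x < 3) ∧ Locked B TT (s :: L) τ := by
  set m' := max m ρ.length with hm'
  have hml : m ≤ m' := le_max_left _ _
  have hρl : ρ.length ≤ m' := le_max_right _ _
  -- the class of good `h`
  have hR : PrimrecPred (fun q : List ℕ × List ℕ => ∃ y ∈ strs B q.1.length,
      TT (pre (fr ρ (sw (fn (q.1.map fun v => v.unpair.1)) (fn q.2))) q.1.length, y) ∧
      AG L m' y (q.1.map fun v => v.unpair.2.unpair.1) ∧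
      AG [s] m' y (q.1.map fun v => v.unpair.2.unpair.2)) := by
    have m1 : Primrec (fun q : List ℕ × List ℕ => q.1.map fun v => v.unpair.1) :=
      Primrec.list_map Primrec.fst (Primrec.fst.comp (Primrec.unpair.comp Primrec.snd))
    have m2 : Primrec (fun q : List ℕ × List ℕ => q.1.map fun v => v.unpair.2.unpair.1) :=
      Primrec.list_map Primrec.fst (Primrec.fst.comp (Primrec.unpair.comp
        (Primrec.snd.comp (Primrec.unpair.comp Primrec.snd))))
    have m3 : Primrec (fun q : List ℕ × List ℕ => q.1.map fun v => v.unpair.2.unpair.2) :=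
      Primrec.list_map Primrec.fst (Primrec.snd.comp (Primrec.unpair.comp
        (Primrec.snd.comp (Primrec.unpair.comp Primrec.snd))))
    refine primrec_bex_list (p := fun q : (List ℕ × List ℕ) × List ℕ =>
      TT (pre (fr ρ (sw (fn (q.1.1.map fun v => v.unpair.1)) (fn q.1.2))) q.1.1.length, q.2) ∧
      AG L m' q.2 (q.1.1.map fun v => v.unpair.2.unpair.1) ∧
      AG [s] m' q.2 (q.1.1.map fun v => v.unpair.2.unpair.2)) (PrimrecPred.and ?_
      (PrimrecPred.and ?_ ?_)) ((primrec_strs B).comp (Primrec.list_length.comp Primrec.fst))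
    · refine hprim.comp (Primrec.pair ?_ Primrec.snd)
      refine primrec_pre (F := fun q : (List ℕ × List ℕ) × List ℕ =>
        fr ρ (sw (fn (q.1.1.map fun v => v.unpair.1)) (fn q.1.2))) ?_
        (Primrec.list_length.comp (Primrec.fst.comp Primrec.fst))
      refine primrec_fr ρ (F := fun q : (List ℕ × List ℕ) × List ℕ =>
        sw (fn (q.1.1.map fun v => v.unpair.1)) (fn q.1.2)) ?_
      refine primrec_sw (F := fun q : (List ℕ × List ℕ) × List ℕ =>
        fn (q.1.1.map fun v => v.unpair.1)) (G := fun q : (List ℕ × List ℕ) × List ℕ => fn q.1.2)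
        ?_ ?_
      · exact primrec_fn.comp (m1.comp (Primrec.fst.comp Primrec.fst)) Primrec.snd
      · exact primrec_fn.comp (Primrec.snd.comp (Primrec.fst.comp Primrec.fst)) Primrec.snd
    · exact (primrec_AG L m').comp (Primrec.pair Primrec.snd (m2.comp Primrec.fst))
    · exact (primrec_AG [s] m').comp (Primrec.pair Primrec.snd (m3.comp Primrec.fst))
  have e1 : ∀ k, (pre (ot a (ot Z Y')) k).map (fun v => v.unpair.1) = pre a k := by
    intro k; rw [pre_map]; exact pre_congr fun i _ => by simp [ot]
  have e2 : ∀ k, (pre (ot a (ot Z Y')) k).map (fun v => v.unpair.2.unpair.1) = pre Z k := by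
    intro k; rw [pre_map]; exact pre_congr fun i _ => by simp [ot]
  have e3 : ∀ k, (pre (ot a (ot Z Y')) k).map (fun v => v.unpair.2.unpair.2) = pre Y' k := by
    intro k; rw [pre_map]; exact pre_congr fun i _ => by simp [ot]
  have e4 : ∀ (f g : ℕ → ℕ) k, pre (fr ρ (sw (fn (pre f k)) (fn (pre g k)))) k =
      pre (fr ρ (sw f g)) k := by
    intro f g k
    refine pre_congr fun i hi => ?_
    simp only [fr, sw, fn_pre hi]
  obtain ⟨n, hn⟩ := hg _ (hpa.pair (hpZ.pair hpY')) _ hR (fun k => by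
    simp only [pre_length, e1, e2, e3, e4]
    refine ⟨pre Y k, pre_mem_strs hYB, hT k, ?_, ?_⟩
    · exact AG_pre.2 (fun s hs i hi => hA s hs i (hρl.trans hi)) k
    · refine AG_pre.2 (fun s' hs i hi => ?_) k
      rw [List.mem_singleton] at hs
      subst hs
      exact hm i (hml.trans hi))
  simp only [pre_length, e1, e2, e3, e4] at hn
  set θ := pre H n with hθ
  have hθ3 : ∀ x ∈ θ, x < 3 := (mem_strs.1 (pre_mem_strs h3)).2
  -- the oracle-free statement about `a`
  have hE : PrimrecPred (fun l : List ℕ => ∃ z ∈ strs B l.length, ∀ h ∈ strs 3 l.length,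
      ∃ y ∈ strs B l.length, TT (pre (fr ρ (sw (fn l) (fr θ (fn h)))) l.length, y) ∧
        AG (s :: L) m' y z) := by
    refine primrec_bex_list (p := fun q : List ℕ × List ℕ => ∀ h ∈ strs 3 q.1.length,
      ∃ y ∈ strs B q.1.length, TT (pre (fr ρ (sw (fn q.1) (fr θ (fn h)))) q.1.length, y) ∧
        AG (s :: L) m' y q.2) ?_ ((primrec_strs B).comp Primrec.list_length)
    refine primrec_ball_list (p := fun q : (List ℕ × List ℕ) × List ℕ =>
      ∃ y ∈ strs B q.1.1.length, TT (pre (fr ρ (sw (fn q.1.1) (fr θ (fn q.2)))) q.1.1.length, y) ∧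
        AG (s :: L) m' y q.1.2) ?_
        ((primrec_strs 3).comp (Primrec.list_length.comp Primrec.fst))
    refine primrec_bex_list (p := fun q : ((List ℕ × List ℕ) × List ℕ) × List ℕ =>
      TT (pre (fr ρ (sw (fn q.1.1.1) (fr θ (fn q.1.2)))) q.1.1.1.length, q.2) ∧
        AG (s :: L) m' q.2 q.1.1.2) (PrimrecPred.and ?_ ?_)
        ((primrec_strs B).comp (Primrec.list_length.comp (Primrec.fst.comp Primrec.fst)))
    · refine hprim.comp (Primrec.pair ?_ Primrec.snd)
      refine primrec_pre (F := fun q : ((List ℕ × List ℕ) × List ℕ) × List ℕ =>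
        fr ρ (sw (fn q.1.1.1) (fr θ (fn q.1.2)))) ?_
        (Primrec.list_length.comp (Primrec.fst.comp (Primrec.fst.comp Primrec.fst)))
      refine primrec_fr ρ (F := fun q : ((List ℕ × List ℕ) × List ℕ) × List ℕ =>
        (sw (fn q.1.1.1) (fr θ (fn q.1.2)))) ?_
      refine primrec_sw (F := fun q : ((List ℕ × List ℕ) × List ℕ) × List ℕ => fn q.1.1.1)
        (G := fun q : ((List ℕ × List ℕ) × List ℕ) × List ℕ => fr θ (fn q.1.2)) ?_ ?_
      · exact primrec_fn.comp (Primrec.fst.comp (Primrec.fst.comp (Primrec.fst.comp Primrec.fst)))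
          Primrec.snd
      · refine primrec_fr θ (F := fun q : ((List ℕ × List ℕ) × List ℕ) × List ℕ => fn q.1.2) ?_
        exact primrec_fn.comp (Primrec.snd.comp (Primrec.fst.comp Primrec.fst)) Primrec.snd
    · exact (primrec_AG (s :: L) m').comp (Primrec.pair Primrec.snd
        (Primrec.snd.comp (Primrec.fst.comp Primrec.fst)))
  have e5 : ∀ (f g : ℕ → ℕ) k, pre (fr ρ (sw (fn (pre f k)) g)) k = pre (fr ρ (sw f g)) k := by
    intro f g k
    refine pre_congr fun i hi => ?_
    simp only [fr, sw, fn_pre hi]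
  obtain ⟨a', ha3, ⟨N, hN⟩, hEa⟩ := ha _ hE (fun k => by
    simp only [pre_length, e5]
    refine ⟨pre Y k, pre_mem_strs hYB, fun h hh => ?_⟩
    obtain ⟨y, hy, h1, h2, h4⟩ := hn (fr θ (fn h)) (fr_lt hθ3 (fn_lt (by norm_num) hh)) (fun i hi => by
      simp only [fr, hθ, pre_length, if_pos hi, pre_get _ _ _ hi]) k
    refine ⟨y, hy, h1, ?_⟩
    intro s' hs i hi hmi
    have hik : i < k := by rwa [(mem_strs.1 hy).1] at hi
    rw [pre_get _ _ _ hik]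
    rcases List.mem_cons.1 hs with rfl | hs
    · rw [h4 s' (by simp) i hi hmi, pre_get _ _ _ hik, hm i (hml.trans hmi)]
    · rw [h2 s' hs i hi hmi, pre_get _ _ _ hik, hA s' hs i (hρl.trans hmi)])
  simp only [pre_length, e5] at hEa
  set M := max N (max m' n) with hM
  have hM1 : N ≤ M := le_max_left _ _
  have hM2 : m' ≤ M := le_trans (le_max_left _ _) (le_max_right _ _)
  have hM3 : n ≤ M := le_trans (le_max_right _ _) (le_max_right _ _)
  refine ⟨pre (fr ρ (sw a' (fr θ fun _ => 0))) M, ?_, ?_⟩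
  · exact (mem_strs.1 (pre_mem_strs (fr_lt hρ (sw_lt (fr_lt hθ3 fun _ => by norm_num))))).2
  · intro k
    obtain ⟨z, hz, h⟩ := hEa k
    refine ⟨z, hz, fun x hx => ?_⟩
    obtain ⟨y, hy, h1, h2⟩ := h (pre (fun i => if i < M then 0 else fn x i) k) (pre_mem_strs (by
      intro i
      split_ifs
      · norm_num
      · exact fn_lt (by norm_num) hx i))
    refine ⟨y, hy, ?_, ?_⟩
    · convert h1 using 2
      refine pre_congr fun i hi => ?_
      by_cases hiM : i < M
      · simp only [fr, pre_length, hiM, if_true, pre_get _ _ _ hiM, sw, fn_pre hi]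
      · have g1 : ¬ i < ρ.length := by omega
        have g2 : ¬ i < n := by omega
        have g3 : a' i = 0 := hN i (by omega)
        simp [fr, hiM, g1, sw, g3, hθ, g2, fn_pre hi]
    · rw [pre_length]
      exact AG_mono h2 hM2

theorem core (r : ℕ) (hprim : PrimrecPred TT)
    (hmono : ∀ x y j, TT (x, y) → TT (x.take j, y.take j))
    (hfull : ∀ k, ∀ x ∈ strs 3 k, ∃ y ∈ strs B k, TT (x, y)) :
    ∃ O x₀ y₀ x₁ y₁ : ℕ → ℕ, Low O ∧ PW O x₀ ∧ PW O y₀ ∧ PW O x₁ ∧ PW O y₁ ∧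
      (∀ n, x₀ n < 3) ∧ (∀ n, x₁ n < 3) ∧
      (∀ k, TT (pre x₀ k, pre y₀ k)) ∧ (∀ k, TT (pre x₁ k, pre y₁ k)) ∧
      (∃ N, ∀ n, N ≤ n → x₀ n ≠ x₁ n) ∧
      ∀ s < r, ∀ N, ∃ n, N ≤ n ∧ bit s (y₀ n) = bit s (y₁ n) := by
  classical
  -- a maximal locked set
  let Q : ℕ → Prop := fun l => ∃ L ρ : List ℕ, L.length = l ∧ L.Nodup ∧ (∀ s ∈ L, s < r) ∧
    (∀ x ∈ ρ, x < 3) ∧ Locked B TT L ρ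
  have hQb : ∀ l, Q l → l ≤ r := by
    rintro l ⟨L, ρ, rfl, hnd, hlt, -⟩
    have : L ⊆ List.range r := fun s hs => List.mem_range.2 (hlt s hs)
    simpa using (hnd.subperm this).length_le
  have hQ0 : Q 0 := by
    refine ⟨[], [], rfl, List.nodup_nil, by simp, by simp, fun k => ?_⟩
    obtain ⟨z, hz, -⟩ := hfull k (pre (fun _ => 0) k) (pre_mem_strs fun _ => by norm_num)
    refine ⟨z, hz, fun x hx => ?_⟩
    obtain ⟨y, hy, h⟩ := hfull k x hx
    refine ⟨y, hy, ?_, by simp [AG]⟩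
    have hxl := (mem_strs.1 hx).1
    have : pre (fr [] (fn x)) k = x := by
      conv_rhs => rw [list_eq_pre x 0, hxl]
      exact pre_congr fun i _ => by simp [fr, fn]
    rwa [this]
  have hQm := Nat.findGreatest_spec (P := Q) (Nat.zero_le r) hQ0
  obtain ⟨L, ρ, hLl, hnd, hLr, hρ, hLock⟩ := hQm
  have hmax : ∀ l, Q l → l ≤ L.length := fun l hl => by
    rw [hLl]
    exact Nat.le_findGreatest (hQb l hl) hl
  obtain ⟨O₀, Z, hO₀, hid, hZ, hLZ⟩ := exists_Z hprim hmono hLock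
  choose nx H Y hH3 hgen hpO hpH hpY hYB hT hA hnx using chain_step hprim hmono hLZ
  let S : ℕ → St Z := fun j => Nat.rec ⟨O₀, fun _ => 0, hO₀, hid, hZ,
    ⟨fun _ => 0, Primrec.const 0, fun _ => rfl⟩, fun _ => by norm_num⟩ (fun _ s => nx s) j
  have hS : ∀ j, S (j+1) = nx (S j) := fun j => rfl
  have hSO : ∀ i j, i ≤ j → PW (S j).O (S i).O := by
    intro i j h
    induction j, h using Nat.le_induction with
    | base => exact PW.refl _
    | succ j _ ih => exact (hpO (S j)).trans ih
  have hap : ∀ j, Approx (S j).a := by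
    intro j
    induction j with
    | zero => exact approx_zero
    | succ j ih =>
      rw [hS, hnx]
      exact ih.step (S j).pa (hgen _) (hH3 _)
  have hpers : ∀ i j n, i ≤ j → (S i).a n ≠ 0 → (S j).a n = (S i).a n := by
    intro i j n h h0
    induction j, h using Nat.le_induction with
    | base => rfl
    | succ j _ ih =>
      rw [hS, hnx, mg, if_neg (by rw [ih]; exact h0), ih]
  set A := (S (r+1)).a with hAdef
  have hc : ∀ i ≤ r, ∀ n, sw (S i).a (H (S i)) n = 0 ∨ sw (S i).a (H (S i)) n = A n := by
    intro i hi n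
    by_cases h0 : (S i).a n = 0
    · by_cases h1 : H (S i) n = 0
      · left; simp [sw, h1]
      · right
        have : (S (i+1)).a n = H (S i) n := by rw [hS, hnx, mg, if_pos h0]
        rw [hAdef, hpers (i+1) (r+1) n (by omega) (by rw [this]; exact h1), this, sw, if_pos h0]
    · left; simp [sw, h0]
  let d : ℕ → ℕ := fun n => if A n = 2 then 1 else 2
  have hd3 : ∀ n, d n < 3 := fun n => by simp only [d]; split_ifs <;> norm_num
  have hpd : PW (S (r+1)).O d := by
    refine PW.map2 (F := fun u _ => if u = 2 then 1 else 2) (S (r+1)).pa (S (r+1)).pa ?_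
    exact Primrec.ite (Primrec.eq.comp Primrec.fst (Primrec.const 2)) (Primrec.const 1)
      (Primrec.const 2)
  have hdc : ∀ i ≤ r, ∀ n, sw (S i).a (H (S i)) n ≠ d n := by
    intro i hi n h
    have := hc i hi n
    simp only [d] at h
    split_ifs at h <;> omega
  obtain ⟨YD, hYDB, hlowD, hTD, hAD⟩ := exists_Y hprim hmono hLZ (S (r+1)).low (S (r+1)).pid
    (S (r+1)).pZ hpd hd3
  have kl := PW.left (S (r+1)).O YD
  by_cases hgood : ∃ i ≤ r, ∀ s < r, ∀ N, ∃ n, N ≤ n ∧ bit s (Y (S i) n) = bit s (YD n)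
  · obtain ⟨i, hi, hg⟩ := hgood
    have hpi : PW (ot (S (r+1)).O YD) (S (i+1)).O := kl.trans (hSO (i+1) (r+1) (by omega))
    have hpi' : PW (ot (S (r+1)).O YD) (S i).O := kl.trans (hSO i (r+1) (by omega))
    refine ⟨ot (S (r+1)).O YD, fr ρ (sw (S i).a (H (S i))), Y (S i), fr ρ d, YD, hlowD,
      PW_fr ρ (kl.trans (S (r+1)).pid) (PW_sw (hpi'.trans (S i).pa) (hpi.trans (hpH (S i)))),
      hpi.trans (hpY (S i)), PW_fr ρ (kl.trans (S (r+1)).pid) (kl.trans hpd), PW.right _ _,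
      fr_lt hρ (sw_lt (hH3 _)), fr_lt hρ hd3, hT _, hTD, ⟨ρ.length, fun n hn => ?_⟩, hg⟩
    have : ¬ n < ρ.length := by omega
    simp only [fr, if_neg this]
    exact hdc i hi n
  · exfalso
    push Not at hgood
    choose! s hs m hm using hgood
    obtain ⟨i, hi, j, hj, hne, hij⟩ := Finset.exists_ne_map_eq_of_card_lt_of_maps_to
      (s := Finset.range (r+1)) (t := Finset.range r) (by simp) (f := s) (fun i hi => by
        simp only [Finset.coe_range, Set.mem_Iio] at hi ⊢
        exact hs i (by omega))
    simp only [Finset.mem_range] at hi hj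
    have main : ∀ i j, i < j → j < r + 1 → s i = s j → False := by
      intro i j hlt hj hij
      have hsL : s j ∉ L := by
        intro hin
        have h1 := hA (S j) _ hin (max ρ.length (m j)) (le_max_left _ _)
        have h2 := hAD _ hin (max ρ.length (m j)) (le_max_left _ _)
        exact hm j (by omega) _ (le_max_right _ _) (h1.trans h2.symm)
      have hpYi : PW (S j).O (Y (S i)) := (hSO (i+1) j (by omega)).trans (hpY (S i))
      obtain ⟨τ, hτ, hl⟩ := extend_lock (s := s j) (m := max (m i) (m j)) hprim hρ (hap j) (S j).pa
        (S j).pZ hpYi (hgen (S j)) (hH3 _) (hYB (S j)) (hT (S j)) (hA (S j)) (by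
          intro n hn
          have h1 := hm j (by omega) n (le_trans (le_max_right _ _) hn)
          have h2 := hm i (by omega) n (le_trans (le_max_left _ _) hn)
          rw [hij] at h2
          have b1 := bit_lt (s j) (Y (S i) n)
          have b2 := bit_lt (s j) (Y (S j) n)
          have b3 := bit_lt (s j) (YD n)
          omega)
      have := hmax (L.length + 1) ⟨s j :: L, τ, by simp, List.nodup_cons.2 ⟨hsL, hnd⟩, by
        intro t ht
        rcases List.mem_cons.1 ht with rfl | ht
        · exact hs j (by omega)
        · exact hLr t ht, hτ, hl⟩
      omega
    rcases lt_or_gt_of_ne hne with h | h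
    · exact main i j h hj hij
    · exact main j i h hi hij.symm
end core
end Paper

namespace Paper

/-! ### Bridging to oracle codes -/

open Nat.Partrec (Code)

/-- Evaluation with a partial oracle. -/
def poeval (P : ℕ →. ℕ) : OCode → ℕ →. ℕ
  | .zero => pure 0
  | .succ => Nat.succ
  | .left => ↑fun n : ℕ => n.unpair.1
  | .right => ↑fun n : ℕ => n.unpair.2
  | .oracle => P
  | .pair cf cg => fun n => Nat.pair <$> poeval P cf n <*> poeval P cg n
  | .comp cf cg => fun n => poeval P cg n >>= poeval P cf
  | .prec cf cg =>
    Nat.unpaired fun a n =>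
      n.rec (poeval P cf a) fun y IH => do
        let i ← IH
        poeval P cg (Nat.pair a (Nat.pair y i))
  | .rfind' cf =>
    Nat.unpaired fun a m =>
      (Nat.rfind fun n => (fun m => m = 0) <$> poeval P cf (Nat.pair a (n + m))).map (· + m)

theorem poeval_total (F : ℕ → ℕ) (c : OCode) : poeval (F : ℕ →. ℕ) c = oeval F c := by
  induction c with
  | zero => rfl
  | succ => rfl
  | left => rfl
  | right => rfl
  | oracle => rfl
  | pair a b iha ihb => simp only [poeval, oeval, iha, ihb]; rfl
  | comp a b iha ihb => simp only [poeval, oeval, iha, ihb]; rfl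
  | prec a b iha ihb => simp only [poeval, oeval, iha, ihb]; rfl
  | rfind' a iha => simp only [poeval, oeval, iha]; rfl

theorem mem_pair {P : ℕ →. ℕ} {a b : OCode} {x y : ℕ} :
    y ∈ poeval P (.pair a b) x ↔
      ∃ u ∈ poeval P a x, ∃ v ∈ poeval P b x, y = Nat.pair u v := by
  simp only [poeval, Seq.seq, Part.map_eq_map, Part.bind_eq_bind, Part.mem_bind_iff,
    Part.mem_map_iff]
  constructor
  · rintro ⟨g, ⟨u, hu, rfl⟩, v, hv, rfl⟩
    exact ⟨u, hu, v, hv, rfl⟩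
  · rintro ⟨u, hu, v, hv, rfl⟩
    exact ⟨_, ⟨u, hu, rfl⟩, v, hv, rfl⟩

theorem mem_comp {P : ℕ →. ℕ} {a b : OCode} {x y : ℕ} :
    y ∈ poeval P (.comp a b) x ↔ ∃ u ∈ poeval P b x, y ∈ poeval P a u := by
  exact Part.mem_bind_iff

theorem mem_prec_zero {P : ℕ →. ℕ} {a b : OCode} {x y : ℕ} :
    y ∈ poeval P (.prec a b) (Nat.pair x 0) ↔ y ∈ poeval P a x := by
  simp only [poeval, Nat.unpaired, Nat.unpair_pair]
  exact Iff.rfl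

theorem mem_prec_succ {P : ℕ →. ℕ} {a b : OCode} {x n y : ℕ} :
    y ∈ poeval P (.prec a b) (Nat.pair x (n+1)) ↔ ∃ i ∈ poeval P (.prec a b) (Nat.pair x n),
      y ∈ poeval P b (Nat.pair x (Nat.pair n i)) := by
  simp only [poeval, Nat.unpaired, Nat.unpair_pair, Part.bind_eq_bind, Part.mem_bind_iff]

theorem mem_rfind {P : ℕ →. ℕ} {a : OCode} {x m y : ℕ} :
    y ∈ poeval P (.rfind' a) (Nat.pair x m) ↔ ∃ n, y = n + m ∧
      0 ∈ poeval P a (Nat.pair x (n + m)) ∧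
      ∀ i < n, ∃ v ∈ poeval P a (Nat.pair x (i + m)), v ≠ 0 := by
  simp only [poeval, Nat.unpaired, Nat.unpair_pair, Part.mem_map_iff]
  constructor
  · rintro ⟨n, hn, rfl⟩
    obtain ⟨h0, h⟩ := Nat.mem_rfind.1 hn
    obtain ⟨u, hu, hu0⟩ := (Part.mem_map_iff _).1 h0
    refine ⟨n, rfl, ?_, fun i hi => ?_⟩
    · have e : u = 0 := by simpa using hu0
      rwa [← e]
    · obtain ⟨v, hv, hv0⟩ := (Part.mem_map_iff _).1 (h hi)
      exact ⟨v, hv, by simpa using hv0⟩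
  · rintro ⟨n, rfl, h0, h⟩
    refine ⟨n, Nat.mem_rfind.2 ⟨(Part.mem_map_iff _).2 ⟨0, h0, by simp⟩, fun {i} hi => ?_⟩, rfl⟩
    obtain ⟨v, hv, hv0⟩ := h i hi
    exact (Part.mem_map_iff _).2 ⟨v, hv, by simpa using hv0⟩

theorem poeval_mono {P Q : ℕ →. ℕ} (h : ∀ x y, y ∈ P x → y ∈ Q x) (c : OCode) :
    ∀ x y, y ∈ poeval P c x → y ∈ poeval Q c x := by
  induction c with
  | zero => exact fun _ _ h => h
  | succ => exact fun _ _ h => h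
  | left => exact fun _ _ h => h
  | right => exact fun _ _ h => h
  | oracle => exact h
  | pair a b iha ihb =>
    intro x y hy
    rw [mem_pair] at *
    obtain ⟨u, hu, v, hv, e⟩ := hy
    exact ⟨u, iha _ _ hu, v, ihb _ _ hv, e⟩
  | comp a b iha ihb =>
    intro x y hy
    rw [mem_comp] at *
    obtain ⟨u, hu, hv⟩ := hy
    exact ⟨u, ihb _ _ hu, iha _ _ hv⟩
  | prec a b iha ihb =>
    intro x
    rw [← Nat.pair_unpair x]
    generalize x.unpair.1 = u
    generalize x.unpair.2 = n
    induction n with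
    | zero =>
      intro y hy
      rw [mem_prec_zero] at *
      exact iha _ _ hy
    | succ n ih =>
      intro y hy
      rw [mem_prec_succ] at *
      obtain ⟨i, hi, hy⟩ := hy
      exact ⟨i, ih _ hi, ihb _ _ hy⟩
  | rfind' a iha =>
    intro x y hy
    rw [← Nat.pair_unpair x] at *
    rw [mem_rfind] at *
    obtain ⟨n, e, h0, h⟩ := hy
    refine ⟨n, e, iha _ _ h0, fun i hi => ?_⟩
    obtain ⟨v, hv, hv0⟩ := h i hi
    exact ⟨v, iha _ _ hv, hv0⟩

/-- Lookup in a list as a partial function. -/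
def lookP (l : List ℕ) : ℕ →. ℕ := fun x => (l[x]? : Option ℕ)

theorem mem_lookP {F : ℕ → ℕ} {k x y : ℕ} : y ∈ lookP (pre F k) x ↔ x < k ∧ y = F x := by
  simp only [lookP, pre_get?]
  by_cases h : x < k
  · simp [h, eq_comm]
  · simp [h]

theorem poeval_cont (F : ℕ → ℕ) (c : OCode) :
    ∀ x y, y ∈ oeval F c x → ∃ k, y ∈ poeval (lookP (pre F k)) c x := by
  have mono : ∀ {k k' : ℕ} (c : OCode) {x y : ℕ}, k ≤ k' → y ∈ poeval (lookP (pre F k)) c x →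
      y ∈ poeval (lookP (pre F k')) c x := by
    intro k k' c x y hk h
    refine poeval_mono ?_ c x y h
    intro x y h
    rw [mem_lookP] at *
    exact ⟨by omega, h.2⟩
  rw [← poeval_total]
  induction c with
  | zero => exact fun _ _ h => ⟨0, h⟩
  | succ => exact fun _ _ h => ⟨0, h⟩
  | left => exact fun _ _ h => ⟨0, h⟩
  | right => exact fun _ _ h => ⟨0, h⟩
  | oracle =>
    intro x y h
    refine ⟨x+1, mem_lookP.2 ⟨by omega, ?_⟩⟩
    simpa [poeval] using h
  | pair a b iha ihb =>
    intro x y hy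
    rw [mem_pair] at hy
    obtain ⟨u, hu, v, hv, e⟩ := hy
    obtain ⟨k1, h1⟩ := iha _ _ hu
    obtain ⟨k2, h2⟩ := ihb _ _ hv
    exact ⟨max k1 k2, mem_pair.2 ⟨u, mono _ (le_max_left _ _) h1, v, mono _ (le_max_right _ _) h2, e⟩⟩
  | comp a b iha ihb =>
    intro x y hy
    rw [mem_comp] at hy
    obtain ⟨u, hu, hv⟩ := hy
    obtain ⟨k1, h1⟩ := ihb _ _ hu
    obtain ⟨k2, h2⟩ := iha _ _ hv
    exact ⟨max k1 k2, mem_comp.2 ⟨u, mono _ (le_max_left _ _) h1, mono _ (le_max_right _ _) h2⟩⟩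
  | prec a b iha ihb =>
    intro x
    rw [← Nat.pair_unpair x]
    generalize x.unpair.1 = u
    generalize x.unpair.2 = n
    induction n with
    | zero =>
      intro y hy
      rw [mem_prec_zero] at hy
      obtain ⟨k, h⟩ := iha _ _ hy
      exact ⟨k, mem_prec_zero.2 h⟩
    | succ n ih =>
      intro y hy
      rw [mem_prec_succ] at hy
      obtain ⟨i, hi, hy⟩ := hy
      obtain ⟨k1, h1⟩ := ih _ hi
      obtain ⟨k2, h2⟩ := ihb _ _ hy
      exact ⟨max k1 k2, mem_prec_succ.2
        ⟨i, mono _ (le_max_left _ _) h1, mono _ (le_max_right _ _) h2⟩⟩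
  | rfind' a iha =>
    intro x y hy
    rw [← Nat.pair_unpair x] at *
    rw [mem_rfind] at hy
    obtain ⟨n, e, h0, h⟩ := hy
    obtain ⟨k0, hk0⟩ := iha _ _ h0
    have : ∀ i, ∃ k, i < n → ∃ v ∈ poeval (lookP (pre F k)) a
        (Nat.pair x.unpair.1 (i + x.unpair.2)), v ≠ 0 := by
      intro i
      by_cases hi : i < n
      · obtain ⟨v, hv, hv0⟩ := h i hi
        obtain ⟨k, hk⟩ := iha _ _ hv
        exact ⟨k, fun _ => ⟨v, hk, hv0⟩⟩
      · exact ⟨0, fun h => absurd h hi⟩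
    choose g hg using this
    refine ⟨max k0 ((Finset.range n).sup g), mem_rfind.2 ⟨n, e, mono _ (le_max_left _ _) hk0,
      fun i hi => ?_⟩⟩
    obtain ⟨v, hv, hv0⟩ := hg i hi
    exact ⟨v, mono _ (le_trans (Finset.le_sup (f := g) (Finset.mem_range.2 hi))
      (le_max_right _ _)) hv, hv0⟩

theorem oeval_iff (F : ℕ → ℕ) (c : OCode) (x y : ℕ) :
    y ∈ oeval F c x ↔ ∃ k, y ∈ poeval (lookP (pre F k)) c x := by
  refine ⟨poeval_cont F c x y, ?_⟩
  rintro ⟨k, h⟩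
  rw [← poeval_total]
  refine poeval_mono ?_ c x y h
  intro x y h
  rw [mem_lookP] at h
  simp [h.2]

theorem exists_lookup_code : ∃ c : Code, ∀ (l : List ℕ) x,
    Code.eval (Code.curry c (Encodable.encode l)) x = lookP l x := by
  have h1 : Primrec (fun n : ℕ => (Denumerable.ofNat (List ℕ) n.unpair.1)[n.unpair.2]?) :=
    Primrec.list_getElem?.comp ((Primrec.ofNat (List ℕ)).comp (Primrec.fst.comp Primrec.unpair))
      (Primrec.snd.comp Primrec.unpair)
  have h2 : Partrec (fun n : ℕ =>
      (((Denumerable.ofNat (List ℕ) n.unpair.1)[n.unpair.2]? : Option ℕ) : Part ℕ)) :=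
    h1.to_comp.ofOption
  obtain ⟨c, hc⟩ := Nat.Partrec.Code.exists_code.1 (Partrec.nat_iff.1 h2)
  refine ⟨c, fun l x => ?_⟩
  rw [Nat.Partrec.Code.eval_curry, hc]
  simp [lookP]

/-- Translation of oracle codes to codes, using a finite table for the oracle. -/
def trc (c₀ : Code) (l : List ℕ) : OCode → Code
  | .zero => .zero
  | .succ => .succ
  | .left => .left
  | .right => .right
  | .oracle => Code.curry c₀ (Encodable.encode l)
  | .pair a b => .pair (trc c₀ l a) (trc c₀ l b)
  | .comp a b => .comp (trc c₀ l a) (trc c₀ l b)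
  | .prec a b => .prec (trc c₀ l a) (trc c₀ l b)
  | .rfind' a => .rfind' (trc c₀ l a)

theorem eval_trc {c₀ : Code} (h₀ : ∀ (l : List ℕ) x,
    Code.eval (Code.curry c₀ (Encodable.encode l)) x = lookP l x) (l : List ℕ) (c : OCode) :
    Code.eval (trc c₀ l c) = poeval (lookP l) c := by
  induction c with
  | zero => rfl
  | succ => rfl
  | left => rfl
  | right => rfl
  | oracle => exact funext (h₀ l)
  | pair a b iha ihb => simp only [poeval, Code.eval, trc, iha, ihb]; rfl
  | comp a b iha ihb => simp only [poeval, Code.eval, trc, iha, ihb]; rfl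
  | prec a b iha ihb => simp only [poeval, Code.eval, trc, iha, ihb]; rfl
  | rfind' a iha => simp only [poeval, Code.eval, trc, iha]; rfl

/-- Decoding of oracle codes. -/
def decO (n : ℕ) : OCode :=
  if n = 0 then .zero else if n = 1 then .succ else if n = 2 then .left else if n = 3 then .right
  else if n = 4 then .oracle
  else if n < 5 then .zero
  else
    if (n - 5) % 4 = 0 then .pair (decO ((n - 5) / 4).unpair.1) (decO ((n - 5) / 4).unpair.2)
    else if (n - 5) % 4 = 1 then .comp (decO ((n - 5) / 4).unpair.1) (decO ((n - 5) / 4).unpair.2)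
    else if (n - 5) % 4 = 2 then .prec (decO ((n - 5) / 4).unpair.1) (decO ((n - 5) / 4).unpair.2)
    else .rfind' (decO ((n - 5) / 4))
termination_by n
decreasing_by
  all_goals
    have h1 := Nat.unpair_left_le ((n - 5) / 4)
    have h2 := Nat.unpair_right_le ((n - 5) / 4)
    omega

theorem decO_pair (q : ℕ) : decO (4 * q + 5) = .pair (decO q.unpair.1) (decO q.unpair.2) := by
  have e1 : (4 * q + 5 - 5) % 4 = 0 := by omega
  have e2 : (4 * q + 5 - 5) / 4 = q := by omega
  rw [decO, if_neg (by omega), if_neg (by omega), if_neg (by omega), if_neg (by omega), if_neg (by omega), if_neg (by omega), e1, e2, if_pos rfl]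

theorem decO_comp (q : ℕ) : decO (4 * q + 6) = .comp (decO q.unpair.1) (decO q.unpair.2) := by
  have e1 : (4 * q + 6 - 5) % 4 = 1 := by omega
  have e2 : (4 * q + 6 - 5) / 4 = q := by omega
  rw [decO, if_neg (by omega), if_neg (by omega), if_neg (by omega), if_neg (by omega), if_neg (by omega), if_neg (by omega), e1, e2, if_neg (by omega), if_pos rfl]

theorem decO_prec (q : ℕ) : decO (4 * q + 7) = .prec (decO q.unpair.1) (decO q.unpair.2) := by
  have e1 : (4 * q + 7 - 5) % 4 = 2 := by omega
  have e2 : (4 * q + 7 - 5) / 4 = q := by omega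
  rw [decO, if_neg (by omega), if_neg (by omega), if_neg (by omega), if_neg (by omega), if_neg (by omega), if_neg (by omega), e1, e2, if_neg (by omega), if_neg (by omega), if_pos rfl]

theorem decO_rfind (q : ℕ) : decO (4 * q + 8) = .rfind' (decO q) := by
  have e1 : (4 * q + 8 - 5) % 4 = 3 := by omega
  have e2 : (4 * q + 8 - 5) / 4 = q := by omega
  rw [decO, if_neg (by omega), if_neg (by omega), if_neg (by omega), if_neg (by omega), if_neg (by omega), if_neg (by omega), e1, e2, if_neg (by omega), if_neg (by omega), if_neg (by omega)]

theorem decO_encode (c : OCode) : decO (encodeOCode c) = c := by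
  induction c with
  | zero => rw [decO]; rfl
  | succ => rw [decO]; rfl
  | left => rw [decO]; rfl
  | right => rw [decO]; rfl
  | oracle => rw [decO]; rfl
  | pair a b iha ihb => rw [encodeOCode, decO_pair]; simp [iha, ihb]
  | comp a b iha ihb => rw [encodeOCode, decO_comp]; simp [iha, ihb]
  | prec a b iha ihb => rw [encodeOCode, decO_prec]; simp [iha, ihb]
  | rfind' a iha => rw [encodeOCode, decO_rfind, iha]

theorem encode_decO (n : ℕ) : encodeOCode (decO n) = n := by
  induction n using Nat.strong_induction_on with
  | _ n ih =>
    have h1 := Nat.unpair_left_le ((n - 5) / 4)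
    have h2 := Nat.unpair_right_le ((n - 5) / 4)
    rw [decO]
    split_ifs with a0 a1 a2 a3 a4 a5 a6 a7 a8
    · simp [encodeOCode, a0]
    · simp [encodeOCode, a1]
    · simp [encodeOCode, a2]
    · simp [encodeOCode, a3]
    · simp [encodeOCode, a4]
    · omega
    · simp only [encodeOCode]
      rw [ih _ (by omega), ih _ (by omega), Nat.pair_unpair]
      omega
    · simp only [encodeOCode]
      rw [ih _ (by omega), ih _ (by omega), Nat.pair_unpair]
      omega
    · simp only [encodeOCode]
      rw [ih _ (by omega), ih _ (by omega), Nat.pair_unpair]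
      omega
    · simp only [encodeOCode]
      rw [ih _ (by omega)]
      omega

/-- One step of the course-of-values recursion for `trc`. -/
def trG (c₀ : Code) (q : List ℕ × List Code) : Code :=
  if q.2.length = 0 then .zero else if q.2.length = 1 then .succ else if q.2.length = 2 then .left
  else if q.2.length = 3 then .right else if q.2.length = 4 then Code.curry c₀ (Encodable.encode q.1)
  else if q.2.length < 5 then .zero else
    if (q.2.length - 5) % 4 = 0 then .pair (q.2.getD ((q.2.length - 5) / 4).unpair.1 Code.zero)
      (q.2.getD ((q.2.length - 5) / 4).unpair.2 Code.zero)
    else if (q.2.length - 5) % 4 = 1 then .comp (q.2.getD ((q.2.length - 5) / 4).unpair.1 Code.zero)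
      (q.2.getD ((q.2.length - 5) / 4).unpair.2 Code.zero)
    else if (q.2.length - 5) % 4 = 2 then .prec (q.2.getD ((q.2.length - 5) / 4).unpair.1 Code.zero)
      (q.2.getD ((q.2.length - 5) / 4).unpair.2 Code.zero)
    else .rfind' (q.2.getD ((q.2.length - 5) / 4) Code.zero)

theorem primrec_tr (c₀ : Code) : Primrec₂ (fun (l : List ℕ) (n : ℕ) => trc c₀ l (decO n)) := by
  have hn : Primrec (fun q : List ℕ × List Code => q.2.length) :=
    Primrec.list_length.comp Primrec.snd
  have hq : Primrec (fun q : List ℕ × List Code => (q.2.length - 5) / 4) :=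
    Primrec.nat_div.comp (Primrec.nat_sub.comp hn (Primrec.const 5)) (Primrec.const 4)
  have ht : Primrec (fun q : List ℕ × List Code => (q.2.length - 5) % 4) :=
    Primrec.nat_mod.comp (Primrec.nat_sub.comp hn (Primrec.const 5)) (Primrec.const 4)
  have ha : Primrec (fun q : List ℕ × List Code =>
      q.2.getD ((q.2.length - 5) / 4).unpair.1 Code.zero) :=
    (Primrec.list_getD Code.zero).comp Primrec.snd (Primrec.fst.comp (Primrec.unpair.comp hq))
  have hb : Primrec (fun q : List ℕ × List Code =>
      q.2.getD ((q.2.length - 5) / 4).unpair.2 Code.zero) :=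
    (Primrec.list_getD Code.zero).comp Primrec.snd (Primrec.snd.comp (Primrec.unpair.comp hq))
  have hc : Primrec (fun q : List ℕ × List Code =>
      q.2.getD ((q.2.length - 5) / 4) Code.zero) :=
    (Primrec.list_getD Code.zero).comp Primrec.snd hq
  have hcur : Primrec (fun q : List ℕ × List Code => Code.curry c₀ (Encodable.encode q.1)) :=
    Nat.Partrec.Code.primrec₂_curry.comp (Primrec.const c₀) (Primrec.encode.comp Primrec.fst)
  have eqn : ∀ i, PrimrecPred (fun q : List ℕ × List Code => q.2.length = i) := fun i =>
    Primrec.eq.comp hn (Primrec.const i)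
  have eqt : ∀ i, PrimrecPred (fun q : List ℕ × List Code => (q.2.length - 5) % 4 = i) := fun i =>
    Primrec.eq.comp ht (Primrec.const i)
  have lt5 : PrimrecPred (fun q : List ℕ × List Code => q.2.length < 5) :=
    Primrec.nat_lt.comp hn (Primrec.const 5)
  have hg : Primrec (trG c₀) := Primrec.ite (eqn 0) (Primrec.const Code.zero) (Primrec.ite (eqn 1)
    (Primrec.const Code.succ) (Primrec.ite (eqn 2) (Primrec.const Code.left) (Primrec.ite (eqn 3)
    (Primrec.const Code.right) (Primrec.ite (eqn 4) hcur (Primrec.ite lt5 (Primrec.const Code.zero)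
    (Primrec.ite (eqt 0) (Nat.Partrec.Code.primrec₂_pair.comp ha hb)
    (Primrec.ite (eqt 1) (Nat.Partrec.Code.primrec₂_comp.comp ha hb)
    (Primrec.ite (eqt 2) (Nat.Partrec.Code.primrec₂_prec.comp ha hb)
    (Nat.Partrec.Code.primrec_rfind'.comp hc)))))))))
  refine Primrec.nat_strong_rec _ (g := fun l L => some (trG c₀ (l, L)))
    (Primrec.option_some.comp hg) ?_
  intro l n
  simp only [trG, List.length_map, List.length_range, Option.some.injEq]
  have h1 := Nat.unpair_left_le ((n - 5) / 4)
  have h2 := Nat.unpair_right_le ((n - 5) / 4)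
  have key : ∀ i < n, ((List.range n).map (fun n => trc c₀ l (decO n))).getD i Code.zero =
      trc c₀ l (decO i) := by
    intro i hi
    simp [List.getD, hi]
  rw [decO.eq_1 n]
  split_ifs with a0 a1 a2 a3 a4 a5 a6 a7 a8
  · rfl
  · rfl
  · rfl
  · rfl
  · rfl
  · rfl
  · rw [key _ (by omega), key _ (by omega)]; rfl
  · rw [key _ (by omega), key _ (by omega)]; rfl
  · rw [key _ (by omega), key _ (by omega)]; rfl
  · rw [key _ (by omega)]; rfl

theorem mem_jump {F : ℕ → ℕ} {n : ℕ} : n ∈ jump F ↔ ∃ y, y ∈ oeval F (decO n.unpair.1) n.unpair.2 := by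
  simp only [jump, Set.mem_ofPred_eq, ← Part.dom_iff_mem]
  constructor
  · rintro ⟨c, hc, h⟩
    rwa [← hc, decO_encode]
  · intro h
    exact ⟨_, encode_decO _, h⟩

theorem sigO_jump (F : ℕ → ℕ) : SigO F (fun n => n ∈ jump F) := by
  obtain ⟨c₀, h₀⟩ := exists_lookup_code
  refine ⟨fun q => ∃ j < q.1.length + 1,
    (Code.evaln q.1.length (trc c₀ (q.1.take j) (decO q.2.unpair.1)) q.2.unpair.2).isSome = true,
    ?_, fun n => ?_⟩
  · refine primrec_bex (p := fun z : (List ℕ × ℕ) × ℕ => (Code.evaln z.1.1.length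
      (trc c₀ (z.1.1.take z.2) (decO z.1.2.unpair.1)) z.1.2.unpair.2).isSome = true) ?_
      (Primrec.succ.comp (Primrec.list_length.comp Primrec.fst))
    have h1 : Primrec (fun z : (List ℕ × ℕ) × ℕ => z.1.1) := Primrec.fst.comp Primrec.fst
    have h2 : Primrec (fun z : (List ℕ × ℕ) × ℕ => z.1.2) := Primrec.snd.comp Primrec.fst
    have h3 : Primrec (fun z : (List ℕ × ℕ) × ℕ => z.1.1.take z.2) :=
      Primrec.list_take.comp Primrec.snd h1
    exact Primrec.eq.comp (Primrec.option_isSome.comp (Nat.Partrec.Code.primrec_evaln.comp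
      (Primrec.pair (Primrec.pair (Primrec.list_length.comp h1)
      ((primrec_tr c₀).comp h3 (Primrec.fst.comp (Primrec.unpair.comp h2))))
      (Primrec.snd.comp (Primrec.unpair.comp h2))))) (Primrec.const true)
  · beta_reduce
    rw [mem_jump]
    simp only [oeval_iff, pre_length, Option.isSome_iff_exists]
    constructor
    · rintro ⟨y, k, h⟩
      rw [← eval_trc h₀, Nat.Partrec.Code.evaln_complete] at h
      obtain ⟨j, hj⟩ := h
      refine ⟨max j k, k, by omega, y, ?_⟩
      rw [pre_take _ _ _ (le_max_right _ _)]
      exact Nat.Partrec.Code.evaln_mono (le_max_left _ _) hj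
    · rintro ⟨k, j, hjk, y, h⟩
      have := Nat.Partrec.Code.evaln_sound h
      rw [eval_trc h₀, pre_take _ _ _ (by omega)] at this
      exact ⟨y, j, this⟩

end Paper

namespace Paper

/-! ### Relative recursiveness from Sigma-2 definitions -/

open Nat.Partrec (Code)

/-- Codes as oracle codes. -/
def toO : Code → OCode
  | .zero => .zero
  | .succ => .succ
  | .left => .left
  | .right => .right
  | .pair a b => .pair (toO a) (toO b)
  | .comp a b => .comp (toO a) (toO b)
  | .prec a b => .prec (toO a) (toO b)
  | .rfind' a => .rfind' (toO a)

theorem oeval_toO (O : ℕ → ℕ) (c : Code) : oeval O (toO c) = Code.eval c := by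
  induction c with
  | zero => rfl
  | succ => rfl
  | left => rfl
  | right => rfl
  | pair a b iha ihb => simp only [oeval, Code.eval, toO, iha, ihb]; rfl
  | comp a b iha ihb => simp only [oeval, Code.eval, toO, iha, ihb]; rfl
  | prec a b iha ihb => simp only [oeval, Code.eval, toO, iha, ihb]; rfl
  | rfind' a iha => simp only [oeval, Code.eval, toO, iha]; rfl

/-- Oracle codes as codes, with the zero oracle. -/
def toC : OCode → Code
  | .zero => .zero
  | .succ => .succ
  | .left => .left
  | .right => .right
  | .oracle => .zero
  | .pair a b => .pair (toC a) (toC b)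
  | .comp a b => .comp (toC a) (toC b)
  | .prec a b => .prec (toC a) (toC b)
  | .rfind' a => .rfind' (toC a)

theorem eval_toC (c : OCode) : Code.eval (toC c) = oeval zeroO c := by
  induction c with
  | zero => rfl
  | succ => rfl
  | left => rfl
  | right => rfl
  | oracle => rfl
  | pair a b iha ihb => simp only [oeval, Code.eval, toC, iha, ihb]; rfl
  | comp a b iha ihb => simp only [oeval, Code.eval, toC, iha, ihb]; rfl
  | prec a b iha ihb => simp only [oeval, Code.eval, toC, iha, ihb]; rfl
  | rfind' a iha => simp only [oeval, Code.eval, toC, iha]; rfl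

theorem RecIn.prim (O : ℕ → ℕ) {f : ℕ → ℕ} (hf : Primrec f) : RecIn O f := by
  obtain ⟨c, hc⟩ := Nat.Partrec.Code.exists_code.1 (Partrec.nat_iff.1 hf.to_comp.partrec)
  refine ⟨toO c, fun n => ?_⟩
  rw [oeval_toO, hc]
  rfl

theorem RecIn.comp {O f g : ℕ → ℕ} (hf : RecIn O f) (hg : RecIn O g) :
    RecIn O (fun n => f (g n)) := by
  obtain ⟨a, ha⟩ := hf
  obtain ⟨b, hb⟩ := hg
  refine ⟨.comp a b, fun n => ?_⟩
  rw [← poeval_total]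
  refine Part.eq_some_iff.2 (mem_comp.2 ⟨g n, ?_, ?_⟩)
  · rw [poeval_total, hb]; simp
  · rw [poeval_total, ha]; simp

theorem RecIn.pair {O f g : ℕ → ℕ} (hf : RecIn O f) (hg : RecIn O g) :
    RecIn O (fun n => Nat.pair (f n) (g n)) := by
  obtain ⟨a, ha⟩ := hf
  obtain ⟨b, hb⟩ := hg
  refine ⟨.pair a b, fun n => ?_⟩
  rw [← poeval_total]
  refine Part.eq_some_iff.2 (mem_pair.2 ⟨f n, ?_, g n, ?_, rfl⟩)
  · rw [poeval_total, ha]; simp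
  · rw [poeval_total, hb]; simp

theorem RecIn.oracle (O : ℕ → ℕ) : RecIn O O := ⟨.oracle, fun _ => rfl⟩

theorem RecIn.mu {O f : ℕ → ℕ} (hf : RecIn O f) (h : ∀ x, ∃ a, f (Nat.pair x a) = 0) :
    ∃ m : ℕ → ℕ, RecIn O m ∧ ∀ x, f (Nat.pair x (m x)) = 0 := by
  classical
  obtain ⟨a, ha⟩ := hf
  obtain ⟨b, hb⟩ := RecIn.prim O (f := fun x => Nat.pair x 0)
    (Primrec₂.natPair.comp Primrec.id (Primrec.const 0))
  refine ⟨fun x => Nat.find (h x), ⟨.comp (.rfind' a) b, fun x => ?_⟩, fun x => Nat.find_spec (h x)⟩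
  rw [← poeval_total]
  refine Part.eq_some_iff.2 (mem_comp.2 ⟨Nat.pair x 0, ?_,
    mem_rfind.2 ⟨Nat.find (h x), rfl, ?_, fun i hi => ?_⟩⟩)
  · rw [poeval_total, hb]; simp
  · rw [poeval_total, ha, Part.mem_some_iff]
    exact (Nat.find_spec (h x)).symm
  · refine ⟨f (Nat.pair x (i + 0)), ?_, Nat.find_min (h x) hi⟩
    rw [poeval_total, ha]; simp

theorem sig2_emptyJump {p : ℕ → Prop} (hp : Sig2 p) :
    ∃ h : ℕ → ℕ, Primrec h ∧ ∀ x, p x ↔ ∃ a, h (Nat.pair x a) ∉ emptyJump := by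
  classical
  obtain ⟨R, hR, hp⟩ := hp
  have h1 : Computable₂ (fun (z : ℕ) (b : ℕ) => decide (¬ R ((z.unpair.1, z.unpair.2), b))) := by
    have := (hR.comp (f := fun q : ℕ × ℕ => ((q.1.unpair.1, q.1.unpair.2), q.2)) (by
      exact Primrec.pair (Primrec.pair (Primrec.fst.comp (Primrec.unpair.comp Primrec.fst))
        (Primrec.snd.comp (Primrec.unpair.comp Primrec.fst))) Primrec.snd)).not
    exact this.decide.to_comp
  have h2 : Partrec (fun z : ℕ => Nat.rfind fun b =>
      Part.some (decide (¬ R ((z.unpair.1, z.unpair.2), b)))) := Partrec.rfind h1.partrec₂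
  obtain ⟨c, hc⟩ := Nat.Partrec.Code.exists_code.1 (Partrec.nat_iff.1 h2)
  refine ⟨fun z => Nat.pair (encodeOCode (toO c)) z,
    Primrec₂.natPair.comp (Primrec.const _) Primrec.id, fun x => ?_⟩
  rw [hp]
  refine exists_congr fun a => ?_
  rw [emptyJump, mem_jump]
  simp only [Nat.unpair_pair, decO_encode, oeval_toO, hc]
  constructor
  · rintro h ⟨y, hy⟩
    have := (Nat.mem_rfind.1 hy).1
    simp at this
    exact this (h y)
  · intro h b
    by_contra hb
    apply h
    exact Part.dom_iff_mem.1 (Nat.rfind_dom.2 ⟨b, by simpa using hb, by simp⟩)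

theorem recIn_of_sig2 {p : ℕ → Prop} (hp : Sig2 p) (hn : Sig2 (fun x => ¬ p x)) :
    RecIn (chi emptyJump) (chi {x | p x}) := by
  classical
  obtain ⟨h1, ph1, e1⟩ := sig2_emptyJump hp
  obtain ⟨h2, ph2, e2⟩ := sig2_emptyJump hn
  set J := chi emptyJump with hJ
  have J0 : ∀ n, n ∉ emptyJump → J n = 0 := fun n h => by simp [hJ, chi, h]
  have J1 : ∀ n, n ∈ emptyJump → J n = 1 := fun n h => by simp [hJ, chi, h]
  have c1 : RecIn J (fun z => J (h1 z)) := (RecIn.oracle J).comp (RecIn.prim J ph1)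
  have c2 : RecIn J (fun z => J (h2 z)) := (RecIn.oracle J).comp (RecIn.prim J ph2)
  have pm : Primrec (fun z : ℕ => z.unpair.1 * z.unpair.2) :=
    Primrec.nat_mul.comp (Primrec.fst.comp Primrec.unpair) (Primrec.snd.comp Primrec.unpair)
  have c3 := (RecIn.prim J pm).comp (c1.pair c2)
  obtain ⟨m, hm, hm0⟩ := c3.mu (by
    intro x
    simp only [Nat.unpair_pair]
    by_cases h : p x
    · obtain ⟨a, ha⟩ := (e1 x).1 h
      exact ⟨a, by rw [J0 _ ha, zero_mul]⟩
    · obtain ⟨a, ha⟩ := (e2 x).1 h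
      exact ⟨a, by rw [J0 _ ha, mul_zero]⟩)
  have c4 := (RecIn.prim J (f := fun n => 1 - n)
    (Primrec.nat_sub.comp (Primrec.const 1) Primrec.id)).comp
    (c1.comp ((RecIn.prim J Primrec.id).pair hm))
  convert c4 using 1
  funext x
  have hx := hm0 x
  simp only [Nat.unpair_pair, id] at hx ⊢
  by_cases h : h1 (Nat.pair x (m x)) ∈ emptyJump
  · rw [J1 _ h] at hx ⊢
    have : ¬ p x := by
      refine (e2 x).2 ⟨m x, fun h' => ?_⟩
      rw [J1 _ h'] at hx
      omega
    simp [chi, this]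
  · rw [J0 _ h]
    have : p x := (e1 x).2 ⟨m x, h⟩
    simp [chi, this]

/-- Transfer of relative enumerability along a bounded primitive recursive reduction. -/
theorem SigO.transfer {O F : ℕ → ℕ} {p : ℕ → Prop} {φ : ℕ → ℕ → ℕ} {v : ℕ → ℕ}
    (hφ : Primrec₂ φ) (hv : Primrec v) (hvle : ∀ m, v m ≤ m) (hF : ∀ m, F m = φ m (O (v m)))
    (h : SigO F p) : SigO O p := by
  obtain ⟨R, hR, hp⟩ := h
  refine ⟨fun q => R ((List.range q.1.length).map (fun m => φ m (q.1.getD (v m) 0)), q.2),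
    hR.comp ?_, fun x => ?_⟩
  · refine Primrec.pair (Primrec.list_map (Primrec.list_range.comp
      (Primrec.list_length.comp Primrec.fst)) ?_) Primrec.snd
    exact hφ.comp Primrec.snd ((Primrec.list_getD 0).comp (Primrec.fst.comp Primrec.fst)
      (hv.comp Primrec.snd))
  · rw [hp]
    refine exists_congr fun k => ?_
    beta_reduce
    have : pre F k = (List.range (pre O k).length).map (fun m => φ m ((pre O k).getD (v m) 0)) := by
      rw [pre_length]
      refine List.map_congr_left fun m hm => ?_
      rw [List.mem_range] at hm
      rw [pre_get _ _ _ (lt_of_le_of_lt (hvle m) hm), hF]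
    rw [this]

end Paper

namespace Paper

/-! ### The tree predicate -/

open Nat.Partrec (Code)

/-- Encoding of a node given by numerical strings. -/
def encN (r : ℕ) (x y : List ℕ) : ℕ :=
  Nat.pair (Encodable.encode (x.map (Fin.ofNat 3)))
    (Encodable.encode ((List.range r).map fun s => y.map (fun v => Fin.ofNat 2 (bit s v))))

theorem primrec_encN (r : ℕ) : Primrec₂ (encN r) := by
  have h3 : Primrec (Fin.ofNat 3) := Primrec.fin_val_iff.1
    (Primrec.nat_mod.comp Primrec.id (Primrec.const 3))
  have h2 : Primrec (Fin.ofNat 2) := Primrec.fin_val_iff.1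
    (Primrec.nat_mod.comp Primrec.id (Primrec.const 2))
  refine Primrec₂.natPair.comp (Primrec.encode.comp (Primrec.list_map Primrec.fst
    (h3.comp Primrec.snd).to₂)) (Primrec.encode.comp (Primrec.list_map (Primrec.const _) ?_))
  refine Primrec.list_map (Primrec.snd.comp Primrec.fst) ?_
  exact h2.comp (primrec_bit.comp (Primrec.snd.comp Primrec.fst) Primrec.snd)

theorem encN_pre (r : ℕ) (x y : ℕ → ℕ) (j : ℕ) :
    encN r (pre x j) (pre y j) = encNode (r := r) (seg (fun n => Fin.ofNat 3 (x n)) j,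
      fun s => seg (fun n => Fin.ofNat 2 (bit s (y n))) j) := by
  have key : ∀ {α : Type} (f : ℕ → α) (z : ℕ → ℕ) (g : ℕ → α), (∀ n, g n = f (z n)) →
      (pre z j).map f = seg g j := by
    intro α f z g h
    apply List.ext_getElem
    · simp [seg]
    · intro i h1 h2
      simp [seg, pre, h]
  unfold encN encNode
  rw [key _ _ (fun n => Fin.ofNat 3 (x n)) (fun n => rfl)]
  congr 2
  apply List.ext_getElem
  · simp
  · intro i h1 h2
    simp only [List.getElem_map, List.getElem_range, List.getElem_ofFn]
    exact key (fun v => Fin.ofNat 2 (bit i v)) y _ (fun n => rfl)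

/-- Bounded-time approximation of the tree, numerically. -/
def TT (r : ℕ) (c : Code) (q : List ℕ × List ℕ) : Prop :=
  ∀ j < q.1.length + 1, Code.evaln q.1.length c (encN r (q.1.take j) (q.2.take j)) ≠ some 0

theorem primrec_TT (r : ℕ) (c : Code) : PrimrecPred (TT r c) := by
  refine primrec_ball (p := fun z : (List ℕ × List ℕ) × ℕ => Code.evaln z.1.1.length c
    (encN r (z.1.1.take z.2) (z.1.2.take z.2)) ≠ some 0) ?_
    (Primrec.succ.comp (Primrec.list_length.comp Primrec.fst))
  have h1 : Primrec (fun z : (List ℕ × List ℕ) × ℕ => z.1.1) := Primrec.fst.comp Primrec.fst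
  have h2 : Primrec (fun z : (List ℕ × List ℕ) × ℕ => z.1.2) := Primrec.snd.comp Primrec.fst
  refine PrimrecPred.not (Primrec.eq.comp (Nat.Partrec.Code.primrec_evaln.comp (Primrec.pair
    (Primrec.pair (Primrec.list_length.comp h1) (Primrec.const c)) ?_)) (Primrec.const (some 0)))
  exact (primrec_encN r).comp (Primrec.list_take.comp Primrec.snd h1)
    (Primrec.list_take.comp Primrec.snd h2)

theorem TT_mono (r : ℕ) (c : Code) (x y : List ℕ) (i : ℕ) (h : TT r c (x, y)) :
    TT r c (x.take i, y.take i) := by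
  intro j hj he
  simp only [List.length_take] at hj he
  have hji : min j i = j := min_eq_left (by omega)
  rw [List.take_take, List.take_take, hji] at he
  refine h j (by simp; omega) ?_
  exact Nat.Partrec.Code.evaln_mono (min_le_right _ _) he

theorem exists_bits (r : ℕ) (Y : Fin r → Fin 2) :
    ∃ v < 2 ^ r, ∀ s : Fin r, Fin.ofNat 2 (bit s v) = Y s := by
  refine ⟨Nat.ofBits (fun s => decide (Y s = 1)), Nat.ofBits_lt_two_pow _, fun s => ?_⟩
  have h := Nat.testBit_ofBits_lt (fun s => decide (Y s = 1)) s s.2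
  rw [Nat.testBit_eq_decide_div_mod_eq] at h
  have hb := bit_lt s (Nat.ofBits (fun s => decide (Y s = 1)))
  apply Fin.ext
  unfold bit at hb ⊢
  have hy := (Y s).2
  rw [decide_eq_decide, Fin.ext_iff] at h
  have h11 : ((1 : Fin 2) : ℕ) = 1 := rfl
  simp only [h11] at h
  change _ / 2 ^ (s : ℕ) % 2 % 2 = _
  generalize Nat.ofBits (fun s => decide (Y s = 1)) / 2 ^ (s : ℕ) % 2 = t at *
  have h2 : t = 1 ↔ (Y s : ℕ) = 1 := h
  omega

theorem cc_low_basis_aux (r : ℕ) (T : CrossTree r) (hcomp : TreeComputable T) (hfull : LeftFull T) :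
    ∃ X Y, CCSolution T X Y ∧ RecIn (chi emptyJump)
      (chi (jump (joinF (solOracle (X 0) (Y 0)) (solOracle (X 1) (Y 1))))) := by
  classical
  obtain ⟨c', hc'⟩ := hcomp
  obtain ⟨c, hc⟩ : ∃ c : Code, ∀ n, Code.eval c n =
      Part.some (chi {n | ∃ p ∈ T.mem, encNode p = n} n) := ⟨toC c', fun n => by rw [eval_toC, hc']⟩
  have inj : Function.Injective (encNode (r := r)) := by
    rintro ⟨a, b⟩ ⟨a', b'⟩ h
    simp only [encNode, Nat.pair_eq_pair, Encodable.encode_inj] at h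
    obtain ⟨h1, h2⟩ := h
    rw [List.ofFn_injective h2, h1]
  have hmem : ∀ p, (0 : ℕ) ∈ Code.eval c (encNode p) ↔ p ∉ T.mem := by
    intro p
    rw [hc, Part.mem_some_iff]
    by_cases hp : p ∈ T.mem
    · have : encNode p ∈ {n | ∃ p ∈ T.mem, encNode p = n} := ⟨p, hp, rfl⟩
      simp only [chi, Set.indicator_of_mem this]
      simp [hp]
    · have : encNode p ∉ {n | ∃ p ∈ T.mem, encNode p = n} := by
        rintro ⟨q, hq, e⟩
        exact hp (inj e ▸ hq)
      simp only [chi, Set.indicator_of_notMem this]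
      simp [hp]
  have path : ∀ x y : ℕ → ℕ, (∀ k, TT r c (pre x k, pre y k)) ↔
      IsPath T (fun n => Fin.ofNat 3 (x n)) (fun s n => Fin.ofNat 2 (bit s (y n))) := by
    intro x y
    constructor
    · intro h n
      by_contra hn
      rw [← hmem, ← encN_pre, Nat.Partrec.Code.evaln_complete] at hn
      obtain ⟨k, hk⟩ := hn
      refine h (max n k) n (by simp) ?_
      simp only [pre_length]
      rw [pre_take _ _ _ (le_max_left _ _), pre_take _ _ _ (le_max_left _ _)]
      exact Nat.Partrec.Code.evaln_mono (le_max_right _ _) hk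
    · intro h k j hj he
      simp only [pre_length] at hj he
      rw [pre_take _ _ _ (by omega), pre_take _ _ _ (by omega)] at he
      have := Nat.Partrec.Code.evaln_sound he
      rw [encN_pre, hmem] at this
      exact this (h j)
  obtain ⟨O, x₀, y₀, x₁, y₁, low, ⟨fx₀, pfx₀, ex₀⟩, ⟨fy₀, pfy₀, ey₀⟩, ⟨fx₁, pfx₁, ex₁⟩,
    ⟨fy₁, pfy₁, ey₁⟩, lx₀, lx₁, t₀, t₁, ⟨N, hN⟩, hagree⟩ :=
    core (B := 2 ^ r) (TT := TT r c) r (primrec_TT r c) (TT_mono r c) (by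
      intro k x hx
      obtain ⟨Y, -, hY⟩ := hfull (fun n => Fin.ofNat 3 (fn x n)) (fun i => i.elim0)
      choose y hy1 hy2 using fun n => exists_bits r (fun s => Y s n)
      refine ⟨pre y k, pre_mem_strs hy1, ?_⟩
      have : pre (fn x) k = x := by
        have := list_eq_pre x 0
        rw [(mem_strs.1 hx).1] at this
        exact this.symm
      have hp := (path (fn x) y).2 (by
        convert hY using 1
        funext s n
        exact hy2 n s) k
      rwa [this] at hp)
  refine ⟨fun i => if i = 0 then fun n => Fin.ofNat 3 (x₀ n) else fun n => Fin.ofNat 3 (x₁ n),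
    fun i => if i = 0 then fun s n => Fin.ofNat 2 (bit s (y₀ n))
      else fun s n => Fin.ofNat 2 (bit s (y₁ n)), ⟨?_, ?_, ?_⟩, ?_⟩
  · intro i
    by_cases hi : i = 0
    · simp only [hi, if_true]
      exact (path _ _).1 t₀
    · simp only [hi, if_false]
      exact (path _ _).1 t₁
  · intro j
    refine (Set.finite_lt_nat N).subset ?_
    rintro n ⟨h0, h1⟩
    by_contra hn
    apply hN n (by simpa using hn)
    have h := congrArg Fin.val (h0.trans h1.symm)
    simp [Fin.ofNat] at h
    rwa [Nat.mod_eq_of_lt (lx₀ n), Nat.mod_eq_of_lt (lx₁ n)] at h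
  · intro s
    by_contra hcon
    push Not at hcon
    have h0 := hcon 0
    have h1 := hcon 1
    obtain ⟨M, hM⟩ := (h0.union h1).bddAbove
    obtain ⟨n, hn, e⟩ := hagree s s.2 (M + 1)
    have : n ≤ M := by
      apply hM
      have h01 : ∀ u : Fin 2, u = 0 ∨ u = 1 := by decide
      rcases h01 (Fin.ofNat 2 (bit s (y₀ n))) with h | h
      · have h' := h
        rw [e] at h'
        exact Or.inl ⟨h, h'⟩
      · have h' := h
        rw [e] at h'
        exact Or.inr ⟨h, h'⟩
    omega
  · have hv : Primrec (fun m : ℕ => (m / 2).unpair) :=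
      Primrec.unpair.comp (Primrec.nat_div.comp Primrec.id (Primrec.const 2))
    have hs : ∀ fx fy : ℕ → ℕ, Primrec fx → Primrec fy → Primrec (fun q : ℕ × ℕ =>
        if (q.1 / 2).unpair.1 = 0 then fx q.2 % 3 else if (q.1 / 2).unpair.1 - 1 < r then
          bit ((q.1 / 2).unpair.1 - 1) (fy q.2) % 2 else 0) := by
      intro fx fy hfx hfy
      have h1 : Primrec (fun q : ℕ × ℕ => (q.1 / 2).unpair.1) :=
        Primrec.fst.comp (hv.comp Primrec.fst)
      have h2 : Primrec (fun q : ℕ × ℕ => (q.1 / 2).unpair.1 - 1) :=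
        Primrec.nat_sub.comp h1 (Primrec.const 1)
      refine Primrec.ite (Primrec.eq.comp h1 (Primrec.const 0))
        (Primrec.nat_mod.comp (hfx.comp Primrec.snd) (Primrec.const 3))
        (Primrec.ite (Primrec.nat_lt.comp h2 (Primrec.const r))
        (Primrec.nat_mod.comp (primrec_bit.comp h2 (hfy.comp Primrec.snd)) (Primrec.const 2))
        (Primrec.const 0))
    have hφ := Primrec.ite (Primrec.eq.comp (Primrec.nat_mod.comp
      (Primrec.fst (α := ℕ) (β := ℕ)) (Primrec.const 2)) (Primrec.const 0))
      (hs fx₀ fy₀ pfx₀ pfy₀) (hs fx₁ fy₁ pfx₁ pfy₁)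
    have key := SigO.transfer (O := O) (v := fun m => (m / 2).unpair.2) (φ := fun m o =>
        if m % 2 = 0 then (if (m / 2).unpair.1 = 0 then fx₀ o % 3 else if (m / 2).unpair.1 - 1 < r then
          bit ((m / 2).unpair.1 - 1) (fy₀ o) % 2 else 0) else
          (if (m / 2).unpair.1 = 0 then fx₁ o % 3 else if (m / 2).unpair.1 - 1 < r then
          bit ((m / 2).unpair.1 - 1) (fy₁ o) % 2 else 0)) hφ (Primrec.snd.comp hv)
      (fun m => (Nat.unpair_right_le _).trans (Nat.div_le_self _ _)) (F := joinF
        (solOracle (r := r) (fun n => Fin.ofNat 3 (x₀ n)) (fun s n => Fin.ofNat 2 (bit s (y₀ n))))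
        (solOracle (r := r) (fun n => Fin.ofNat 3 (x₁ n)) (fun s n => Fin.ofNat 2 (bit s (y₁ n)))))
      (by
        intro m
        simp only [joinF, solOracle, ex₀, ex₁, ey₀, ey₁]
        congr 1) (sigO_jump _)
    have h2 := low.sig key
    exact recIn_of_sig2 h2.1 h2.2

end Paper

namespace Paper

/-- Cross-constraint low basis theorem: every left-full computable instance of the
cross-constraint problem has a solution whose join is low. -/
theorem cc_low_basis (r : ℕ) (T : CrossTree r)
    (hcomp : TreeComputable T) (hfull : LeftFull T) :
    ∃ (X : Fin 2 → ℕ → Fin 3) (Y : Fin 2 → Fin r → ℕ → Fin 2),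
      CCSolution T X Y ∧
      RecIn (chi emptyJump)
        (chi (jump (joinF (solOracle (X 0) (Y 0)) (solOracle (X 1) (Y 1))))) := by
  exact cc_low_basis_aux r T hcomp hfull

end Paper
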